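/- Two directed graphs with d vertices given by irreducible stochastic matrices can have non-isomorphic Cuntz–Pimsner algebras in the correspondence setting, but for Arveson–Stinespring subproduct systems of a d×d irreducible stochastic matrix P, the Cuntz–Pimsner algebra satisfies O(Arv(P)) ≅ C(𝕋) ⊗ M_d(ℂ). -/

import Mathlib

/- STATEMENT 11.  While in the correspondence (graph-algebra) setting two directed graphs on
`d` vertices with irreducible stochastic adjacency matrices can have non-isomorphic
Cuntz–Pimsner algebras, for the Arveson–Stinespring subproduct system `Arv(P)` of a `d × d`
irreducible stochastic matrix `P`, Viselter's Cuntz–Pimsner algebra satisfies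
`O(Arv(P)) ≅ C(𝕋) ⊗ M_d(ℂ)`.  We realize the Toeplitz algebra `T(Arv(P))` concretely on the
Fock Hilbert space (the Fock module tensored over `ℓ^∞` with `ℓ²(d)`), define the Cuntz ideal
`J = {T : ‖T Q_{[n,∞)}‖ → 0}`, and express the isomorphism of the quotient `O(Arv(P))` with
`C(𝕋, M_d(ℂ)) = M_d(C(𝕋))` by a surjective star-algebra homomorphism with kernel `J`. -/

def IsStochastic {Ω : Type*} (P : Ω → Ω → ℝ) : Prop :=
  (∀ i j, 0 ≤ P i j) ∧ ∀ i, HasSum (fun j => P i j) 1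

noncomputable def stochMul {Ω : Type*} (P Q : Ω → Ω → ℝ) : Ω → Ω → ℝ :=
  fun i k => ∑' j, P i j * Q j k

open Classical in
noncomputable def stochPow {Ω : Type*} (P : Ω → Ω → ℝ) : ℕ → Ω → Ω → ℝ
  | 0 => fun i j => if i = j then 1 else 0
  | n + 1 => stochMul (stochPow P n) P

/-- Irreducibility: every pair of states communicates. -/
def StochIrreducible {Ω : Type*} (P : Ω → Ω → ℝ) : Prop :=
  ∀ i j : Ω, ∃ n : ℕ, 0 < stochPow P n i j

variable (d : ℕ) (P : Fin d → Fin d → ℝ)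

/-- The `n`-th fiber of `Arv(P)`, viewed inside the Fock Hilbert space: matrices supported on
the support of `P^n` (with the Frobenius = `ℓ²` inner product coming from the `ℓ^∞(Ω)`-valued
one of the W*-correspondence `Arv(P)_n`). -/
def arvFiber (n : ℕ) : Submodule ℂ (EuclideanSpace ℂ (Fin d × Fin d)) where
  carrier := {v | ∀ p : Fin d × Fin d, ¬ 0 < stochPow P n p.1 p.2 → v p = 0}
  add_mem' := by
    intro a b ha hb p hp
    have := ha p hp; have := hb p hp
    simp_all [Pi.add_apply]
  zero_mem' := by intro p _; rfl
  smul_mem' := by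
    intro c a ha p hp
    have := ha p hp
    simp_all [Pi.smul_apply]

/-- The Fock Hilbert space of `Arv(P)`. -/
abbrev FockH : Type := lp (fun n : ℕ => ↥(arvFiber d P n)) 2

noncomputable instance : InnerProductSpace ℂ (FockH d P) := lp.instInnerProductSpace

/-- The matrix coefficients of the subproduct maps `U_{n,k}` of `Arv(P)` in its standard
presentation. -/
noncomputable def arvCoef (n k : ℕ) (i j l : Fin d) : ℂ :=
  if 0 < stochPow P (n + k) i l then
    ((Real.sqrt (stochPow P n i j * stochPow P k j l) /
        Real.sqrt (stochPow P (n + k) i l) : ℝ) : ℂ)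
  else 0

/-- `T` is the shift `S^{(n)}_A` for some `n` and some `A ∈ Arv(P)_n`:
`(S_A ξ)_{n+k} = U_{n,k}(A ⊗ ξ_k)` and `(S_A ξ)_m = 0` for `m < n`. -/
def IsShiftOp (T : FockH d P →L[ℂ] FockH d P) : Prop :=
  ∃ (n : ℕ) (A : Fin d → Fin d → ℂ),
    (∀ i j, ¬ 0 < stochPow P n i j → A i j = 0) ∧
    ∀ f : FockH d P,
      (∀ m, m < n → (T f) m = 0) ∧
      ∀ (k : ℕ) (il : Fin d × Fin d),
        (((T f) (n + k) : EuclideanSpace ℂ (Fin d × Fin d)) il =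
          ∑ j : Fin d, arvCoef d P n k il.1 j il.2 * A il.1 j *
            ((f k : EuclideanSpace ℂ (Fin d × Fin d)) (j, il.2)))

/-- `T` is the multiplication operator by an element `a ∈ ℓ^∞(Ω) = M ⊆ T(Arv(P))`. -/
def IsDiagOp (T : FockH d P →L[ℂ] FockH d P) : Prop :=
  ∃ a : Fin d → ℂ, ∀ (f : FockH d P) (m : ℕ) (il : Fin d × Fin d),
    ((T f) m : EuclideanSpace ℂ (Fin d × Fin d)) il =
      a il.1 * ((f m : EuclideanSpace ℂ (Fin d × Fin d)) il)

/-- The Toeplitz algebra `T(Arv(P))`: the C*-algebra generated by `ℓ^∞(Ω)` and the shifts. -/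
noncomputable def ToeplitzAlg : StarSubalgebra ℂ (FockH d P →L[ℂ] FockH d P) :=
  (StarAlgebra.adjoin ℂ {T | IsShiftOp d P T ∨ IsDiagOp d P T}).topologicalClosure

/-- `‖T Q_{[n,∞)}‖`: the norm of `T` on the part of the Fock space of degree `≥ n`. -/
noncomputable def tailNorm (T : FockH d P →L[ℂ] FockH d P) (n : ℕ) : ℝ :=
  ⨆ f : {f : FockH d P // ‖f‖ ≤ 1 ∧ ∀ m < n, f m = 0}, ‖T f.1‖

/-- Membership in the Cuntz ideal `J(T(Arv(P))) = {T : ‖T Q_{[n,∞)}‖ → 0}`. -/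
def InCuntzIdeal (T : FockH d P →L[ℂ] FockH d P) : Prop :=
  Filter.Tendsto (tailNorm d P T) Filter.atTop (nhds 0)

/-! Let `r` be the period of `P`. As `k → ∞`, the ratio `P^k(j, l) / P^{n+k}(i, l)` tends to `1`
whenever `P^n(i, j)` and `P^k(j, l)` are positive, so on vectors of high degree the shift by `A`
acts almost like left multiplication by the matrix `(√(P^n(i, j)) A(i, j))`. Replacing the degree
by the number of times the walk has gone around its `r` cyclic classes embeds the Fock space
isometrically into matrices over `L²(𝕋)`, and turns this left multiplication into multiplication by
a matrix of monomials over `C(𝕋)`, the symbol. An operator lies in the Cuntz ideal exactly when its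
symbol vanishes: a multiplication operator that is small on all Fourier modes of high degree is
zero, by translation invariance. The pairs (operator, symbol) therefore form the graph of a
`*`-homomorphism. It is onto because every entry `z ^ m` with `m` large is the symbol of a shift,
and products of these with adjoints give all the Fourier monomials. -/

section CStarAlgebra

open scoped CStarAlgebra ComplexOrder

variable {A B : Type*} [CStarAlgebra A] [CStarAlgebra B]

/-- The continuous function equal to `1` on `[0, c²]` and to `c / √t` beyond: multiplying `T` by
`normClip c (T⋆T)` cuts the singular values of `T` down to `c`. -/
noncomputable def normClip (c t : ℝ) : ℝ := c / max c √t

section NormClip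

variable {c : ℝ}

lemma continuous_normClip (hc : 0 < c) : Continuous (normClip c) :=
  continuous_const.div (continuous_const.max Real.continuous_sqrt) fun _ =>
    (hc.trans_le (le_max_left _ _)).ne'

lemma normClip_nonneg (hc : 0 < c) (t : ℝ) : 0 ≤ normClip c t :=
  div_nonneg hc.le (hc.le.trans (le_max_left _ _))

lemma normClip_eq_one (hc : 0 < c) {t : ℝ} (ht : t ≤ c ^ 2) : normClip c t = 1 := by
  rw [normClip, max_eq_left ((Real.sqrt_le_left hc.le).mpr ht), div_self hc.ne']

lemma normClip_mul_sqrt_le (hc : 0 < c) (t : ℝ) : normClip c t * √t ≤ c := by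
  rw [normClip, div_mul_eq_mul_div, div_le_iff₀ (hc.trans_le (le_max_left _ _))]
  gcongr
  exact le_max_right _ _

lemma cfc_normClip_eq_one (hc : 0 < c) {a : A} (ha : IsSelfAdjoint a) (hac : ‖a‖ ≤ c ^ 2) :
    cfc (normClip c) a = 1 := by
  nontriviality A
  rw [← cfc_const_one ℝ a]
  exact cfc_congr fun t ht => normClip_eq_one hc <|
    (le_abs_self t).trans ((spectrum.norm_le_norm_of_mem ht).trans hac)

lemma norm_mul_cfc_normClip_le (hc : 0 < c) (T : A) :
    ‖T * cfc (normClip c) (star T * T)‖ ≤ c := by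
  have hcont := (continuous_normClip hc).continuousOn (s := spectrum ℝ (star T * T))
  have hsa : IsSelfAdjoint (cfc (normClip c) (star T * T)) := cfc_predicate _ _
  have hsq : star (T * cfc (normClip c) (star T * T)) * (T * cfc (normClip c) (star T * T)) =
      cfc (fun t => normClip c t * t * normClip c t) (star T * T) := by
    rw [cfc_mul (fun t => normClip c t * t) (normClip c) _ (hcont.mul continuousOn_id) hcont,
      cfc_mul (normClip c) (fun t => t) _ hcont, cfc_id' ℝ (star T * T), star_mul, hsa.star_eq]
    simp only [mul_assoc]
  refine (pow_le_pow_iff_left₀ (norm_nonneg _) hc.le two_ne_zero).mp ?_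
  rw [sq, ← CStarRing.norm_star_mul_self, hsq]
  refine norm_cfc_le (by positivity) fun t ht => ?_
  have ht0 : 0 ≤ t := spectrum_star_mul_self_nonneg t ht
  have hnn := normClip_nonneg hc t
  rw [Real.norm_of_nonneg (by positivity)]
  calc normClip c t * t * normClip c t = (normClip c t * √t) ^ 2 := by
        rw [mul_pow, Real.sq_sqrt ht0]
        ring
    _ ≤ c ^ 2 := by
      gcongr
      exact normClip_mul_sqrt_le hc t

end NormClip

lemma exists_map_eq_and_norm_le (φ : A →⋆ₐ[ℂ] B) (T : A) :
    ∃ T', φ T' = φ T ∧ ‖T'‖ ≤ ‖φ T‖ := by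
  by_cases hφT : φ T = 0
  · exact ⟨0, by rw [map_zero, hφT], by simp⟩
  have hpos : 0 < ‖φ T‖ := norm_pos_iff.mpr hφT
  have hsa : IsSelfAdjoint (star (φ T) * φ T) := .star_mul_self _
  have hmap : φ (star T * T) = star (φ T) * φ T := by rw [map_mul, map_star]
  refine ⟨T * cfc (normClip ‖φ T‖) (star T * T), ?_, norm_mul_cfc_normClip_le hpos T⟩
  rw [map_mul, StarAlgHomClass.map_cfc φ (normClip ‖φ T‖) (star T * T)
      (continuous_normClip hpos).continuousOn (map_continuous φ) (.star_mul_self _) (hmap ▸ hsa),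
    hmap, cfc_normClip_eq_one hpos hsa (by rw [CStarRing.norm_star_mul_self, sq]), mul_one]

theorem isClosed_range_starAlgHom (φ : A →⋆ₐ[ℂ] B) : IsClosed (φ.range : Set B) := by
  let f : NormedAddGroupHom A B := (φ : A →+ B).mkNormedAddGroupHom 1 fun T =>
    (one_mul ‖T‖).symm ▸ NonUnitalStarAlgHom.norm_apply_le φ T
  have hf : f.SurjectiveOnWith (φ : A →+ B).range 1 := by
    rintro _ ⟨T, rfl⟩
    obtain ⟨T', hT', hle⟩ := exists_map_eq_and_norm_le φ T
    exact ⟨T', hT', by rwa [one_mul]⟩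
  refine isClosed_of_closure_subset fun b hb => ?_
  obtain ⟨T, hT, -⟩ := controlled_closure_of_complete one_pos one_pos hf b hb
  exact ⟨T, hT⟩

section Graph

variable {G : StarSubalgebra ℂ (A × B)}

lemma snd_eq_of_mem_of_mem (hG0 : ∀ b, ((0 : A), b) ∈ G → b = 0) {a : A} {b b' : B}
    (h : (a, b) ∈ G) (h' : (a, b') ∈ G) : b = b' := by
  refine sub_eq_zero.mp (hG0 _ ?_)
  rw [← sub_self a]
  exact G.sub_mem h h'

lemma injective_fst_comp_subtype (hG0 : ∀ b, ((0 : A), b) ∈ G → b = 0) :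
    Function.Injective ((StarAlgHom.fst ℂ A B).comp G.subtype) := by
  rintro ⟨⟨a, b⟩, h⟩ ⟨⟨_, b'⟩, h'⟩ rfl
  exact Subtype.ext (Prod.ext rfl (snd_eq_of_mem_of_mem hG0 h h'))

/-- The graph over the closed `*`-subalgebra generated by `X` is again a graph, because the range of
the first projection is closed. -/
theorem exists_starAlgHom_closure_adjoin_mem_graph (hG : IsClosed (G : Set (A × B)))
    (hG0 : ∀ b, ((0 : A), b) ∈ G → b = 0) {X : Set A} (hX : ∀ x ∈ X, ∃ b, (x, b) ∈ G) :
    ∃ Ψ : (StarAlgebra.adjoin ℂ X).topologicalClosure →⋆ₐ[ℂ] B, ∀ T, (T.1, Ψ T) ∈ G := by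
  have : IsClosed (G : Set (A × B)) := hG
  let p : G →⋆ₐ[ℂ] A := (StarAlgHom.fst ℂ A B).comp G.subtype
  have hle : (StarAlgebra.adjoin ℂ X).topologicalClosure ≤ p.range := by
    refine StarSubalgebra.topologicalClosure_minimal (StarAlgebra.adjoin_le_iff.mpr ?_)
      (isClosed_range_starAlgHom p)
    intro x hx
    obtain ⟨b, hb⟩ := hX x hx
    exact ⟨⟨(x, b), hb⟩, rfl⟩
  let e := StarAlgEquiv.ofInjective p (injective_fst_comp_subtype hG0)
  let σ : _ →⋆ₐ[ℂ] G := (e.symm : p.range →⋆ₐ[ℂ] G).comp (StarSubalgebra.inclusion hle)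
  refine ⟨(StarAlgHom.snd ℂ A B).comp (G.subtype.comp σ), fun T => ?_⟩
  have hσ : (σ T : A × B).1 = (T : A) := congrArg Subtype.val (e.apply_symm_apply _)
  rw [← hσ]
  exact (σ T).2

theorem exists_surjective_starAlgHom_closure_adjoin_mem_graph (hG : IsClosed (G : Set (A × B)))
    (hG0 : ∀ b, ((0 : A), b) ∈ G → b = 0) {X : Set A} (hX : ∀ x ∈ X, ∃ b, (x, b) ∈ G)
    (hgen : ∀ R : StarSubalgebra ℂ B, IsClosed (R : Set B) →
      (∀ x ∈ X, ∀ b, (x, b) ∈ G → b ∈ R) → R = ⊤) :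
    ∃ Ψ : (StarAlgebra.adjoin ℂ X).topologicalClosure →⋆ₐ[ℂ] B,
      Function.Surjective Ψ ∧ ∀ T, (T.1, Ψ T) ∈ G := by
  have := (StarAlgebra.adjoin ℂ X).isClosed_topologicalClosure
  obtain ⟨Ψ, hΨ⟩ := exists_starAlgHom_closure_adjoin_mem_graph hG hG0 hX
  have hrange : Ψ.range = ⊤ := by
    refine hgen _ (isClosed_range_starAlgHom Ψ) fun x hx b hb => ?_
    let T : (StarAlgebra.adjoin ℂ X).topologicalClosure :=
      ⟨x, StarSubalgebra.le_topologicalClosure _ (StarAlgebra.subset_adjoin ℂ X hx)⟩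
    exact ⟨T, snd_eq_of_mem_of_mem hG0 (hΨ T) hb⟩
  exact ⟨Ψ, fun b => (hrange ▸ StarSubalgebra.mem_top : b ∈ Ψ.range), hΨ⟩

end Graph

end CStarAlgebra

section Markov

variable {Ω : Type*} {P : Ω → Ω → ℝ}

lemma IsStochastic.le_one (hP : IsStochastic P) (i j : Ω) : P i j ≤ 1 :=
  le_hasSum (hP.2 i) j fun l _ => hP.1 i l

section Powers

variable [Fintype Ω]

open Classical in
lemma stochPow_eq_pow (n : ℕ) : stochPow P n = Matrix.of P ^ n := by
  induction n with
  | zero => ext i j; simp [stochPow, Matrix.one_apply]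
  | succ n ih =>
    ext i j
    simp [stochPow, stochMul, tsum_fintype, ih, pow_succ, Matrix.mul_apply]

lemma stochPow_add (m n : ℕ) (i l : Ω) :
    stochPow P (m + n) i l = ∑ j, stochPow P m i j * stochPow P n j l := by
  classical
  simp only [stochPow_eq_pow, pow_add, Matrix.mul_apply]

lemma IsStochastic.sum_eq_one (hP : IsStochastic P) (i : Ω) : ∑ j, P i j = 1 :=
  (hasSum_fintype _).unique (hP.2 i)

lemma isStochastic_iff_mem_rowStochastic [DecidableEq Ω] :
    IsStochastic P ↔ Matrix.of P ∈ Matrix.rowStochastic ℝ Ω :=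
  ⟨fun hP => Matrix.mem_rowStochastic_iff_sum.mpr ⟨hP.1, hP.sum_eq_one⟩, fun h =>
    ⟨(Matrix.mem_rowStochastic_iff_sum.mp h).1, fun i =>
      (Matrix.mem_rowStochastic_iff_sum.mp h).2 i ▸ hasSum_fintype _⟩⟩

end Powers

section PositivePowers

variable [Finite Ω]

lemma IsStochastic.pow (hP : IsStochastic P) (n : ℕ) : IsStochastic (stochPow P n) := by
  classical
  have := Fintype.ofFinite Ω
  rw [stochPow_eq_pow]
  exact isStochastic_iff_mem_rowStochastic.mpr
    (pow_mem (isStochastic_iff_mem_rowStochastic.mp hP) n)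

lemma IsStochastic.mul_le_stochPow_add (hP : IsStochastic P) (m n : ℕ) (i j l : Ω) :
    stochPow P m i j * stochPow P n j l ≤ stochPow P (m + n) i l := by
  have := Fintype.ofFinite Ω
  rw [stochPow_add]
  exact Finset.single_le_sum (f := fun j => stochPow P m i j * stochPow P n j l)
    (fun j _ => mul_nonneg ((hP.pow m).1 i j) ((hP.pow n).1 j l)) (Finset.mem_univ j)

lemma IsStochastic.stochPow_add_pos (hP : IsStochastic P) {m n : ℕ} {i j l : Ω}
    (hij : 0 < stochPow P m i j) (hjl : 0 < stochPow P n j l) :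
    0 < stochPow P (m + n) i l :=
  (mul_pos hij hjl).trans_le (hP.mul_le_stochPow_add m n i j l)

/-- The cyclic structure of a Markov chain: `r` is its period, `c` numbers the cyclic classes
modulo `r`, and from time `N` on every transition allowed by the classes has positive probability.
Class arithmetic is done in `ZMod r`. -/
structure IsCyclicIndex (P : Ω → Ω → ℝ) (r : ℕ) (c : Ω → ℤ) (N : ℕ) : Prop where
  period_pos : 0 < r
  add_eq_of_pos : ∀ {n : ℕ} {i j : Ω}, 0 < stochPow P n i j → (c i : ZMod r) + n = c j
  pos_of_add_eq : ∀ {n : ℕ} {i j : Ω}, N ≤ n → (c i : ZMod r) + n = c j → 0 < stochPow P n i j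

/-- The times at which the chain visits state `o` with positive probability when started there. -/
def returnTimes (hP : IsStochastic P) (o : Ω) : AddSubmonoid ℕ where
  carrier := {n | 0 < stochPow P n o o}
  zero_mem' := by simp [stochPow]
  add_mem' := hP.stochPow_add_pos

lemma IsStochastic.exists_pos (hP : IsStochastic P) (i : Ω) : ∃ j, 0 < P i j := by
  have := Fintype.ofFinite Ω
  by_contra! h
  linarith [hP.sum_eq_one i, Finset.sum_nonpos fun j (_ : j ∈ Finset.univ) => h j]

theorem exists_isCyclicIndex [Nonempty Ω] (hP : IsStochastic P)
    (hirr : StochIrreducible P) : ∃ r c N, IsCyclicIndex P r c N := by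
  have := Fintype.ofFinite Ω
  obtain ⟨o⟩ := ‹Nonempty Ω›
  choose a ha using fun i => hirr o i
  choose b hb using fun i => hirr i o
  obtain ⟨N, hN⟩ := Nat.exists_mem_closure_of_ge (returnTimes hP o : Set ℕ)
  rw [AddSubmonoid.closure_eq] at hN
  set r := Nat.setGcd (returnTimes hP o : Set ℕ)
  have cast_eq_zero {n : ℕ} (hn : 0 < stochPow P n o o) : (n : ZMod r) = 0 :=
    (ZMod.natCast_eq_zero_iff _ _).mpr (Nat.setGcd_dvd_of_mem hn)
  have add_eq_zero (i) : (a i : ZMod r) + b i = 0 :=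
    mod_cast cast_eq_zero (hP.stochPow_add_pos (ha i) (hb i))
  refine ⟨r, fun i => a i, N + ∑ i, a i + ∑ i, b i, ?_, fun {n i j} h => ?_, fun {n i j} hn h => ?_⟩
  · obtain ⟨j, hj⟩ := (hP.pow 1).exists_pos o
    exact Nat.pos_of_dvd_of_pos (Nat.setGcd_dvd_of_mem (hP.stochPow_add_pos hj (hb j))) (by omega)
  · have hloop := cast_eq_zero (hP.stochPow_add_pos (hP.stochPow_add_pos (ha i) h) (hb j))
    push_cast at hloop ⊢
    linear_combination hloop - add_eq_zero j
  · have haj : a j ≤ ∑ i, a i := Finset.single_le_sum (by simp) (Finset.mem_univ j)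
    have hbi : b i ≤ ∑ i, b i := Finset.single_le_sum (by simp) (Finset.mem_univ i)
    obtain ⟨m, rfl⟩ : ∃ m, n = b i + m + a j := ⟨n - b i - a j, by omega⟩
    have hm : r ∣ m := by
      rw [← ZMod.natCast_eq_zero_iff]
      push_cast at h
      linear_combination h - add_eq_zero i
    exact hP.stochPow_add_pos (hP.stochPow_add_pos (hb i) (hN m (by omega) hm)) (ha j)

end PositivePowers

section Averages

variable [Fintype Ω] {p x : Ω → ℝ} {δ lo hi : ℝ} {i : Ω}

lemma le_sum_mul_of_le (hp : ∀ j, 0 ≤ p j) (hp_sum : ∑ j, p j = 1)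
    (hx : ∀ j, 0 < p j → lo ≤ x j) (hδ : δ ≤ p i) (hxi : lo ≤ x i) :
    δ * x i + (1 - δ) * lo ≤ ∑ j, p j * x j := by
  have hterm (j) : 0 ≤ p j * (x j - lo) := by
    rcases (hp j).eq_or_lt with h | h
    · simp [← h]
    · exact mul_nonneg h.le (sub_nonneg.mpr (hx j h))
  calc δ * x i + (1 - δ) * lo = δ * (x i - lo) + lo := by ring
    _ ≤ p i * (x i - lo) + lo := by gcongr
    _ ≤ ∑ j, p j * (x j - lo) + lo := by
      gcongr
      exact Finset.single_le_sum (f := fun j => p j * (x j - lo)) (fun j _ => hterm j)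
        (Finset.mem_univ i)
    _ = ∑ j, p j * x j := by
      simp only [mul_sub, Finset.sum_sub_distrib, ← Finset.sum_mul, hp_sum, one_mul,
        sub_add_cancel]

lemma sum_mul_mem_Icc_of_le (hp : ∀ j, 0 ≤ p j) (hp_sum : ∑ j, p j = 1)
    (hx : ∀ j, 0 < p j → x j ∈ Set.Icc lo hi) (hδ : δ ≤ p i) (hxi : x i ∈ Set.Icc lo hi) :
    ∑ j, p j * x j ∈ Set.Icc (δ * x i + (1 - δ) * lo) (δ * x i + (1 - δ) * hi) := by
  refine ⟨le_sum_mul_of_le hp hp_sum (fun j hj => (hx j hj).1) hδ hxi.1, ?_⟩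
  have := le_sum_mul_of_le (x := -x) hp hp_sum (fun j hj => neg_le_neg (hx j hj).2) hδ
    (neg_le_neg hxi.2)
  simp only [Pi.neg_apply, mul_neg, Finset.sum_neg_distrib] at this
  linarith

lemma sum_mul_mem_Icc (hp : ∀ j, 0 ≤ p j) (hp_sum : ∑ j, p j = 1)
    (hx : ∀ j, 0 < p j → x j ∈ Set.Icc lo hi) : ∑ j, p j * x j ∈ Set.Icc lo hi := by
  simpa only [finsum_eq_sum_of_fintype, smul_eq_mul] using
    (convex_Icc lo hi).finsum_mem hp (by rwa [finsum_eq_sum_of_fintype])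
      fun j hj => hx j ((hp j).lt_of_ne' hj)

end Averages

lemma exists_pos_le_of_pos {ι : Type*} [Finite ι] (x : ι → ℝ) :
    ∃ δ ∈ Set.Ioo (0 : ℝ) 1, ∀ i, 0 < x i → δ ≤ x i := by
  have h : ∀ᶠ δ in nhdsWithin (0 : ℝ) (Set.Ioi 0), ∀ i, 0 < x i → δ ≤ x i :=
    Filter.eventually_all.mpr fun i => by
      by_cases hi : 0 < x i
      · filter_upwards [Ioo_mem_nhdsGT hi] with δ hδ _ using hδ.2.le
      · exact .of_forall fun _ h => absurd h hi
  obtain ⟨δ, hδ, hle⟩ := ((Filter.eventually_mem_set.mpr (Ioo_mem_nhdsGT one_pos)).and h).exists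
  exact ⟨δ, hδ, hle⟩

/-- The entries of column `l` of `P ^ k` in the rows from which the cyclic index `c` allows `l` to
be reached at time `k` all lie in `[lo, hi]`. -/
def ColumnBounds (P : Ω → Ω → ℝ) (r : ℕ) (c : Ω → ℤ) (l : Ω) (k : ℕ) (lo hi : ℝ) : Prop :=
  ∀ j, (c j : ZMod r) + k = c l → stochPow P k j l ∈ Set.Icc lo hi

namespace IsCyclicIndex

open Filter Topology

variable [Finite Ω] {r : ℕ} {c : Ω → ℤ} {N : ℕ}

lemma columnBounds_add (hc : IsCyclicIndex P r c N) (hP : IsStochastic P) {l : Ω} {k : ℕ}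
    {lo hi : ℝ} (h : ColumnBounds P r c l k lo hi) (n : ℕ) :
    ColumnBounds P r c l (n + k) lo hi := by
  intro i hi
  have := Fintype.ofFinite Ω
  rw [stochPow_add]
  refine sum_mul_mem_Icc ((hP.pow n).1 i) ((hP.pow n).sum_eq_one i) fun j hj => h j ?_
  push_cast at hi
  linear_combination hi - hc.add_eq_of_pos hj

/-- Doeblin contraction: after `r * N` steps every state charges the whole of its cyclic class
with mass at least `δ` per state, so the oscillation of a column drops by the factor `1 - δ`. -/
lemma exists_columnBounds_contraction (hc : IsCyclicIndex P r c N) (hP : IsStochastic P)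
    {δ : ℝ} (hδ : δ ∈ Set.Ioo (0 : ℝ) 1)
    (hδP : ∀ i j, 0 < stochPow P (r * N) i j → δ ≤ stochPow P (r * N) i j)
    {l : Ω} {k : ℕ} {lo ε : ℝ} (h : ColumnBounds P r c l k lo (lo + ε)) :
    ∃ lo', lo ≤ lo' ∧ ColumnBounds P r c l (r * N + k) lo' (lo' + (1 - δ) * ε) := by
  have := Fintype.ofFinite Ω
  by_cases hne : ∃ j₀, (c j₀ : ZMod r) + k = c l
  · obtain ⟨j₀, hj₀⟩ := hne
    refine ⟨δ * stochPow P k j₀ l + (1 - δ) * lo, ?_, fun i hi => ?_⟩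
    · nlinarith [(h j₀ hj₀).1, hδ.1]
    have hle : δ ≤ stochPow P (r * N) i j₀ := hδP i j₀ <|
      hc.pos_of_add_eq (Nat.le_mul_of_pos_left N hc.period_pos) (by
        push_cast at hi ⊢
        linear_combination hi - hj₀)
    rw [stochPow_add, add_assoc, ← mul_add]
    refine sum_mul_mem_Icc_of_le ((hP.pow _).1 i) ((hP.pow _).sum_eq_one i)
      (fun j hj => h j ?_) hle (h j₀ hj₀)
    push_cast at hi
    have hij := hc.add_eq_of_pos hj
    push_cast at hij
    linear_combination hi - hij
  · refine ⟨lo, le_rfl, fun i hi => (hne ⟨i, ?_⟩).elim⟩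
    simpa using hi

lemma exists_columnBounds_pow (hc : IsCyclicIndex P r c N) (hP : IsStochastic P) :
    ∃ lo > 0, ∃ δ ∈ Set.Ioo (0 : ℝ) 1, ∀ l t, ∃ lo' ≥ lo, ∀ k ≥ t * (r * N) + N,
      ColumnBounds P r c l k lo' (lo' + (1 - δ) ^ t) := by
  obtain ⟨lo, hlo, hloP⟩ := exists_pos_le_of_pos fun q : Ω × Ω => stochPow P N q.1 q.2
  obtain ⟨δ, hδ, hδP⟩ := exists_pos_le_of_pos fun q : Ω × Ω => stochPow P (r * N) q.1 q.2
  refine ⟨lo, hlo.1, δ, hδ, fun l t => ?_⟩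
  suffices ∃ lo' ≥ lo, ColumnBounds P r c l (t * (r * N) + N) lo' (lo' + (1 - δ) ^ t) by
    obtain ⟨lo', hle, h⟩ := this
    refine ⟨lo', hle, fun k hk => ?_⟩
    simpa only [Nat.sub_add_cancel hk] using hc.columnBounds_add hP h (k - (t * (r * N) + N))
  induction t with
  | zero =>
    refine ⟨lo, le_rfl, fun j hj => ?_⟩
    rw [zero_mul, zero_add] at hj ⊢
    have hle_one := (hP.pow N).le_one j l
    exact ⟨hloP (j, l) (hc.pos_of_add_eq le_rfl hj), by rw [pow_zero]; linarith [hlo.1]⟩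
  | succ t ih =>
    obtain ⟨lo', hle, h⟩ := ih
    obtain ⟨lo'', hle', h'⟩ := hc.exists_columnBounds_contraction hP hδ
      (fun i j => hδP (i, j)) h
    refine ⟨lo'', hle.trans hle', ?_⟩
    rwa [add_one_mul, add_comm (t * (r * N)), add_assoc, pow_succ']

end IsCyclicIndex

/-- Large times `k` at which the cyclic index allows a transition from `j` to `l`. -/
def transitionTimes (r : ℕ) (c : Ω → ℤ) (j l : Ω) : Filter ℕ :=
  Filter.atTop ⊓ Filter.principal {k | (c j : ZMod r) + k = c l}

lemma tendsto_add_transitionTimes {r : ℕ} {c : Ω → ℤ} {i j : Ω} {n : ℕ}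
    (hij : (c i : ZMod r) + n = c j) (l : Ω) :
    Filter.Tendsto (n + ·) (transitionTimes r c j l) (transitionTimes r c i l) := by
  refine Filter.Tendsto.inf (Filter.tendsto_atTop_mono (fun k => Nat.le_add_left k n)
    Filter.tendsto_id) (Filter.tendsto_principal_principal.mpr fun k hk => ?_)
  rw [Set.mem_ofPred_eq] at hk ⊢
  push_cast
  linear_combination hk + hij

namespace IsCyclicIndex

open Filter Topology

variable [Finite Ω] {r : ℕ} {c : Ω → ℤ} {N : ℕ}

/-- The limit exists because the intervals of `exists_columnBounds_pow` shrink geometrically; rows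
and times are taken to the limit jointly, so that it does not depend on the row. -/
theorem exists_tendsto_stochPow (hc : IsCyclicIndex P r c N) (hP : IsStochastic P) (l : Ω) :
    ∃ π > 0, ∀ j, Tendsto (fun k => stochPow P k j l) (transitionTimes r c j l) (𝓝 π) := by
  obtain ⟨lo, hlo, δ, hδ, hbounds⟩ := hc.exists_columnBounds_pow hP
  let times : Filter (Ω × ℕ) := comap Prod.snd atTop ⊓ 𝓟 {q | (c q.1 : ZMod r) + q.2 = c l}
  have eventually_bounds (t : ℕ) : ∃ lo' ≥ lo, ∀ᶠ q in times,
      stochPow P q.2 q.1 l ∈ Set.Icc lo' (lo' + (1 - δ) ^ t) := by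
    obtain ⟨lo', hle, h⟩ := hbounds l t
    refine ⟨lo', hle, eventually_inf_principal.mpr ?_⟩
    filter_upwards [(eventually_ge_atTop (t * (r * N) + N)).comap Prod.snd] with q hq
    exact h q.2 hq q.1
  have times_neBot : times.NeBot := by
    have hl : Tendsto (fun m => (l, r * m)) atTop times := tendsto_inf.mpr
      ⟨tendsto_comap_iff.mpr (tendsto_id.const_mul_atTop' hc.period_pos),
        tendsto_principal.mpr (.of_forall fun m => by simp)⟩
    exact hl.neBot
  have hcauchy : Cauchy (map (fun q : Ω × ℕ => stochPow P q.2 q.1 l) times) := by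
    refine Metric.cauchy_iff.mpr ⟨inferInstance, fun ε hε => ?_⟩
    obtain ⟨t, ht⟩ := exists_pow_lt_of_lt_one hε (sub_lt_self 1 hδ.1)
    obtain ⟨lo', -, h⟩ := eventually_bounds t
    refine ⟨_, h, fun x hx y hy => (Real.dist_le_of_mem_Icc hx hy).trans_lt ?_⟩
    rwa [add_sub_cancel_left]
  obtain ⟨π, hπ⟩ := cauchy_map_iff_exists_tendsto.mp hcauchy
  obtain ⟨lo', hle, h⟩ := eventually_bounds 0
  refine ⟨π, hlo.trans_le (hle.trans (ge_of_tendsto hπ (h.mono fun q hq => hq.1))),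
    fun j => hπ.comp (f := fun k => (j, k)) ?_⟩
  exact tendsto_inf.mpr ⟨tendsto_comap_iff.mpr (tendsto_id.mono_left inf_le_left),
    tendsto_principal.mpr (eventually_inf_principal.mpr (.of_forall fun _ hk => hk))⟩

end IsCyclicIndex

end Markov

section ArvCoef

open Filter Topology

variable {d : ℕ} {P : Fin d → Fin d → ℝ} {r : ℕ} {c : Fin d → ℤ} {N : ℕ}

lemma IsCyclicIndex.tendsto_arvCoef (hc : IsCyclicIndex P r c N) (hP : IsStochastic P) {n : ℕ}
    {i j : Fin d} (hij : 0 < stochPow P n i j) (l : Fin d) :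
    Tendsto (fun k => arvCoef d P n k i j l) (transitionTimes r c j l)
      (𝓝 (Real.sqrt (stochPow P n i j) : ℂ)) := by
  obtain ⟨π, hπ, hlim⟩ := hc.exists_tendsto_stochPow hP l
  have hlim_add := (hlim i).comp (tendsto_add_transitionTimes (hc.add_eq_of_pos hij) l)
  have hquot := ((hlim j).const_mul (stochPow P n i j)).sqrt.div hlim_add.sqrt
    (Real.sqrt_pos.mpr hπ).ne'
  rw [Real.sqrt_mul hij.le, mul_div_cancel_right₀ _ (Real.sqrt_pos.mpr hπ).ne'] at hquot
  refine ((Complex.continuous_ofReal.tendsto _).comp hquot).congr' ?_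
  filter_upwards [hlim_add.eventually_const_lt hπ] with k hk
  exact (if_pos hk).symm

lemma IsCyclicIndex.eventually_norm_arvCoef_mul_sub_le (hc : IsCyclicIndex P r c N)
    (hP : IsStochastic P) {n : ℕ} {A : Fin d → Fin d → ℂ}
    (hA : ∀ i j, ¬ 0 < stochPow P n i j → A i j = 0) {ε : ℝ} (hε : 0 < ε) :
    ∀ᶠ k : ℕ in atTop, ∀ i j l, (c j : ZMod r) + k = c l →
      ‖arvCoef d P n k i j l * A i j - Real.sqrt (stochPow P n i j) * A i j‖ ≤ ε := by
  simp only [eventually_all]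
  intro i j l
  suffices ∀ᶠ k in transitionTimes r c j l,
      ‖arvCoef d P n k i j l * A i j - Real.sqrt (stochPow P n i j) * A i j‖ ≤ ε from
    eventually_inf_principal.mp this
  by_cases hij : 0 < stochPow P n i j
  · have hlim := ((hc.tendsto_arvCoef hP hij l).mul_const (A i j)).sub_const
      (Real.sqrt (stochPow P n i j) * A i j)
    rw [sub_self] at hlim
    exact hlim.norm.eventually_le_const (by rwa [norm_zero])
  · exact .of_forall fun k => by simpa [hA i j hij] using hε.le

end ArvCoef

section Tails

open Filter Topology
open scoped InnerProductSpace

section NormedFibers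

variable {E : ℕ → Type*} [∀ n, NormedAddCommGroup (E n)] [∀ n, NormedSpace ℂ (E n)]

/-- The projection `Q_{[n,∞)}` of a Fock space onto the part of degree at least `n`. -/
noncomputable def tailProj (E : ℕ → Type*) [∀ n, NormedAddCommGroup (E n)]
    [∀ n, NormedSpace ℂ (E n)] (n : ℕ) : lp E 2 →L[ℂ] lp E 2 :=
  1 - ∑ m ∈ Finset.range n, lp.singleContinuousLinearMap ℂ E 2 m ∘L lp.evalCLM ℂ E 2 m

lemma tailProj_apply (n : ℕ) (f : lp E 2) :
    tailProj E n f = f - ∑ m ∈ Finset.range n, lp.single 2 m (f m) := by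
  simp only [tailProj, _root_.sub_apply, _root_.sum_apply]
  rfl

lemma tailProj_apply_coe (n : ℕ) (f : lp E 2) (m : ℕ) :
    tailProj E n f m = if m < n then 0 else f m := by
  have hsum : (∑ k ∈ Finset.range n, lp.single 2 k (f k) : lp E 2) m =
      ∑ k ∈ Finset.range n, lp.single 2 k (f k) m := by
    rw [lp.coeFn_sum, Finset.sum_apply]
  rw [tailProj_apply, lp.coeFn_sub, Pi.sub_apply, hsum]
  split_ifs with hm
  · rw [Finset.sum_eq_single_of_mem m (Finset.mem_range.mpr hm) fun k _ hk =>
      lp.single_apply_ne _ _ _ hk.symm, lp.single_apply_self, sub_self]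
  · rw [Finset.sum_eq_zero fun k hk => lp.single_apply_ne _ _ _
      (ne_of_mem_of_not_mem hk (mt Finset.mem_range.mp hm)).symm, sub_zero]

lemma norm_tailProj_apply_le (n : ℕ) (f : lp E 2) : ‖tailProj E n f‖ ≤ ‖f‖ := by
  refine lp.norm_mono two_ne_zero fun m => ?_
  rw [tailProj_apply_coe]
  split_ifs <;> simp

lemma norm_tailProj_le (n : ℕ) : ‖tailProj E n‖ ≤ 1 :=
  ContinuousLinearMap.opNorm_le_bound _ zero_le_one fun f => by
    simpa only [one_mul] using norm_tailProj_apply_le n f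

lemma tailProj_apply_eq_self {n : ℕ} {f : lp E 2} (hf : ∀ m < n, f m = 0) :
    tailProj E n f = f := by
  ext m
  rw [tailProj_apply_coe]
  split_ifs with hm
  · rw [hf m hm]
  · rfl

lemma tailProj_apply_single {n k : ℕ} (hnk : n ≤ k) (v : E k) :
    tailProj E n (lp.single 2 k v) = lp.single 2 k v :=
  tailProj_apply_eq_self fun _ hm => lp.single_apply_ne _ _ _ (hm.trans_le hnk).ne

variable {K L : Type*} [NormedAddCommGroup K] [NormedSpace ℂ K] [NormedAddCommGroup L]
  [NormedSpace ℂ L]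

/-- The operators `X` out of a Fock space with `‖X Q_{[n,∞)}‖ → 0`. -/
def tailVanishing (E : ℕ → Type*) [∀ n, NormedAddCommGroup (E n)] [∀ n, NormedSpace ℂ (E n)]
    (K : Type*) [NormedAddCommGroup K] [NormedSpace ℂ K] : Submodule ℂ (lp E 2 →L[ℂ] K) where
  carrier := {X | Tendsto (fun n => X ∘L tailProj E n) atTop (𝓝 0)}
  zero_mem' := by simp
  add_mem' hX hY := by simpa only [add_zero] using! hX.add hY
  smul_mem' a X hX := by simpa only [smul_zero] using! hX.const_smul a

lemma mem_tailVanishing {X : lp E 2 →L[ℂ] K} :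
    X ∈ tailVanishing E K ↔ Tendsto (fun n => X ∘L tailProj E n) atTop (𝓝 0) := Iff.rfl

lemma mem_tailVanishing_iff_tendsto_norm {X : lp E 2 →L[ℂ] K} :
    X ∈ tailVanishing E K ↔ Tendsto (fun n => ‖X ∘L tailProj E n‖) atTop (𝓝 0) :=
  tendsto_zero_iff_norm_tendsto_zero

lemma mem_tailVanishing_of_forall_le {X : lp E 2 →L[ℂ] K}
    (h : ∀ ε > 0, ∀ᶠ n in atTop, ∀ f : lp E 2, (∀ m < n, f m = 0) → ‖X f‖ ≤ ε * ‖f‖) :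
    X ∈ tailVanishing E K := by
  refine NormedAddGroup.tendsto_nhds_zero.mpr fun ε hε => ?_
  filter_upwards [h (ε / 2) (half_pos hε)] with n hn
  refine lt_of_le_of_lt (ContinuousLinearMap.opNorm_le_bound _ (by positivity) fun f => ?_)
    (half_lt_self hε)
  exact (hn _ fun m hm => (tailProj_apply_coe n f m).trans (if_pos hm)).trans
    (by gcongr; exact norm_tailProj_apply_le n f)

lemma mem_tailVanishing_of_forall_eq_zero {X : lp E 2 →L[ℂ] K} {N : ℕ}
    (h : ∀ f : lp E 2, (∀ m < N, f m = 0) → X f = 0) : X ∈ tailVanishing E K :=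
  mem_tailVanishing_of_forall_le fun ε hε => by
    filter_upwards [eventually_ge_atTop N] with n hn f hf
    rw [h f fun m hm => hf m (hm.trans_le hn), norm_zero]
    positivity

lemma eventually_norm_apply_single_le {X : lp E 2 →L[ℂ] K} (hX : X ∈ tailVanishing E K) {ε : ℝ}
    (hε : 0 < ε) : ∀ᶠ k in atTop, ∀ v, ‖X (lp.single 2 k v)‖ ≤ ε * ‖v‖ := by
  filter_upwards [(mem_tailVanishing_iff_tendsto_norm.mp hX).eventually_le_const hε] with k hk v
  calc ‖X (lp.single 2 k v)‖ = ‖(X ∘L tailProj E k) (lp.single 2 k v)‖ := by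
        rw [ContinuousLinearMap.comp_apply, tailProj_apply_single le_rfl]
    _ ≤ ε * ‖lp.single (E := E) 2 k v‖ := ContinuousLinearMap.le_of_opNorm_le _ hk _
    _ = ε * ‖v‖ := by rw [lp.norm_single (by norm_num)]

lemma comp_mem_tailVanishing (Z : K →L[ℂ] L) {X : lp E 2 →L[ℂ] K} (hX : X ∈ tailVanishing E K) :
    Z ∘L X ∈ tailVanishing E L := by
  have hZ : Continuous fun Y : lp E 2 →L[ℂ] K => Z ∘L Y := continuous_const.clm_comp continuous_id
  simpa only [ContinuousLinearMap.comp_zero] using! (hZ.tendsto 0).comp (mem_tailVanishing.mp hX)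

lemma isClosed_tailVanishing : IsClosed (tailVanishing E K : Set (lp E 2 →L[ℂ] K)) := by
  refine isClosed_of_closure_subset fun X hX =>
    NormedAddGroup.tendsto_nhds_zero.mpr fun ε hε => ?_
  obtain ⟨Y, hY, hXY⟩ := Metric.mem_closure_iff.mp hX (ε / 2) (half_pos hε)
  filter_upwards [NormedAddGroup.tendsto_nhds_zero.mp hY (ε / 2) (half_pos hε)] with n hn
  calc ‖X ∘L tailProj E n‖ = ‖(X - Y) ∘L tailProj E n + Y ∘L tailProj E n‖ := by
        rw [← ContinuousLinearMap.add_comp, sub_add_cancel]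
    _ ≤ ‖X - Y‖ * ‖tailProj E n‖ + ‖Y ∘L tailProj E n‖ :=
      (norm_add_le _ _).trans (by gcongr; exact ContinuousLinearMap.opNorm_comp_le _ _)
    _ ≤ ‖X - Y‖ + ‖Y ∘L tailProj E n‖ := by
      gcongr
      exact mul_le_of_le_one_right (norm_nonneg _) (norm_tailProj_le n)
    _ < ε := by
      rw [← dist_eq_norm]
      linarith

/-- Composition on the right with `T` respects vanishing on tails as soon as each component of
`T f` does. -/
lemma comp_mem_tailVanishing_of_forall_eval {X : lp E 2 →L[ℂ] K} (hX : X ∈ tailVanishing E K)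
    {T : lp E 2 →L[ℂ] lp E 2} (hT : ∀ m, lp.evalCLM ℂ E 2 m ∘L T ∈ tailVanishing E (E m)) :
    X ∘L T ∈ tailVanishing E K := by
  -- `X T = (X Q_k) T + ∑_{m < k} X ι_m (ev_m T)`; the sum vanishes on tails for each `k`,
  -- and the first term tends to `0` in norm.
  have hsplit (k : ℕ) : X ∘L T - (X ∘L tailProj E k) ∘L T ∈ tailVanishing E K := by
    have : X ∘L T - (X ∘L tailProj E k) ∘L T = ∑ m ∈ Finset.range k,
        (X ∘L lp.singleContinuousLinearMap ℂ E 2 m) ∘L (lp.evalCLM ℂ E 2 m ∘L T) := by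
      ext f
      simp only [_root_.sub_apply, _root_.sum_apply, ContinuousLinearMap.comp_apply,
        tailProj_apply, map_sub, map_sum, sub_sub_cancel]
      rfl
    rw [this]
    exact Submodule.sum_mem _ fun m _ => comp_mem_tailVanishing _ (hT m)
  have hlim : Tendsto (fun k => X ∘L T - (X ∘L tailProj E k) ∘L T) atTop (𝓝 (X ∘L T)) := by
    have hT : Continuous fun Y : lp E 2 →L[ℂ] K => X ∘L T - Y ∘L T :=
      continuous_const.sub (continuous_id.clm_comp continuous_const)
    simpa only [ContinuousLinearMap.zero_comp, sub_zero] using!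
      (hT.tendsto 0).comp (mem_tailVanishing.mp hX)
  exact isClosed_tailVanishing.mem_of_tendsto hlim (.of_forall hsplit)

/-- The operators on a Fock space that asymptotically preserve its filtration by tails. -/
noncomputable def tailPreserving (E : ℕ → Type*) [∀ n, NormedAddCommGroup (E n)]
    [∀ n, NormedSpace ℂ (E n)] : Subalgebra ℂ (lp E 2 →L[ℂ] lp E 2) where
  carrier := {T | ∀ m, lp.evalCLM ℂ E 2 m ∘L T ∈ tailVanishing E (E m)}
  mul_mem' hS hT m := comp_mem_tailVanishing_of_forall_eval (hS m) hT
  add_mem' hS hT m := by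
    rw [ContinuousLinearMap.comp_add]
    exact add_mem (hS m) (hT m)
  algebraMap_mem' z m := mem_tailVanishing_of_forall_eq_zero (N := m + 1) fun f hf => by
    have hfm : lp.evalCLM ℂ E 2 m f = 0 := hf m m.lt_succ_self
    simp [Algebra.algebraMap_eq_smul_one, hfm]

lemma mem_tailPreserving {T : lp E 2 →L[ℂ] lp E 2} :
    T ∈ tailPreserving E ↔ ∀ m, lp.evalCLM ℂ E 2 m ∘L T ∈ tailVanishing E (E m) := Iff.rfl

lemma comp_mem_tailVanishing_of_mem_tailPreserving {X : lp E 2 →L[ℂ] K}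
    (hX : X ∈ tailVanishing E K) {T : lp E 2 →L[ℂ] lp E 2} (hT : T ∈ tailPreserving E) :
    X ∘L T ∈ tailVanishing E K :=
  comp_mem_tailVanishing_of_forall_eval hX hT

lemma isClosed_tailPreserving : IsClosed (tailPreserving E : Set (lp E 2 →L[ℂ] lp E 2)) := by
  have : (tailPreserving E : Set (lp E 2 →L[ℂ] lp E 2)) =
      ⋂ m, (lp.evalCLM ℂ E 2 m).comp ⁻¹' tailVanishing E (E m) := by
    ext T
    simp [mem_tailPreserving]
  rw [this]
  exact isClosed_iInter fun m =>
    isClosed_tailVanishing.preimage (continuous_const.clm_comp continuous_id)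

end NormedFibers

lemma norm_sum_sq_of_pairwise_inner_eq_zero {ι H : Type*} [NormedAddCommGroup H]
    [InnerProductSpace ℂ H] {x : ι → H} (hx : Pairwise fun i j => ⟪x i, x j⟫_ℂ = 0)
    (s : Finset ι) : ‖∑ i ∈ s, x i‖ ^ 2 = ∑ i ∈ s, ‖x i‖ ^ 2 := by
  classical
  induction s using Finset.induction_on with
  | empty => simp
  | insert i s hi ih =>
    have horth : ⟪x i, ∑ j ∈ s, x j⟫_ℂ = 0 := by
      rw [inner_sum]
      exact Finset.sum_eq_zero fun j hj => hx (ne_of_mem_of_not_mem hj hi).symm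
    rw [Finset.sum_insert hi, Finset.sum_insert hi, ← ih]
    simpa only [sq] using norm_add_sq_eq_norm_sq_add_norm_sq_of_inner_eq_zero _ _ horth

/-- On finitely supported vectors this is Pythagoras' theorem. -/
lemma mem_tailVanishing_of_pairwise_inner_eq_zero {E : ℕ → Type*} [∀ n, NormedAddCommGroup (E n)]
    [∀ n, NormedSpace ℂ (E n)] {H : Type*} [NormedAddCommGroup H] [InnerProductSpace ℂ H]
    {X : lp E 2 →L[ℂ] H}
    (horth : ∀ f : lp E 2,
      Pairwise fun j k => ⟪X (lp.single 2 j (f j)), X (lp.single 2 k (f k))⟫_ℂ = 0)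
    (hdecay : ∀ ε > 0, ∀ᶠ k in atTop, ∀ v, ‖X (lp.single 2 k v)‖ ≤ ε * ‖v‖) :
    X ∈ tailVanishing E H := by
  refine mem_tailVanishing_of_forall_le fun ε hε => ?_
  obtain ⟨k₀, hk₀⟩ := eventually_atTop.mp (hdecay ε hε)
  refine eventually_atTop.mpr ⟨k₀, fun n hn f hf => ?_⟩
  have hterm (k : ℕ) : ‖X (lp.single 2 k (f k))‖ ≤ ε * ‖f k‖ := by
    rcases lt_or_ge k n with hk | hk
    · simp [hf k hk]
    · exact hk₀ k (hn.trans hk) (f k)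
  refine le_of_tendsto (X.hasSum (lp.hasSum_single (p := 2) (by norm_num) f)).norm
    (.of_forall fun s => ?_)
  refine (pow_le_pow_iff_left₀ (norm_nonneg _) (by positivity) two_ne_zero).mp ?_
  calc ‖∑ k ∈ s, X (lp.single 2 k (f k))‖ ^ 2 = ∑ k ∈ s, ‖X (lp.single 2 k (f k))‖ ^ 2 :=
        norm_sum_sq_of_pairwise_inner_eq_zero (horth f) s
    _ ≤ ∑ k ∈ s, (ε * ‖f k‖) ^ 2 := by
      gcongr with k
      exact hterm k
    _ = ε ^ 2 * ∑ k ∈ s, ‖f k‖ ^ 2 := by simp only [mul_pow, Finset.mul_sum]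
    _ ≤ ε ^ 2 * ‖f‖ ^ 2 := by
      gcongr
      simpa using lp.sum_rpow_le_norm_rpow (p := 2) (by norm_num) f s
    _ = (ε * ‖f‖) ^ 2 := (mul_pow _ _ _).symm

section CuntzIdeal

variable {d : ℕ} {P : Fin d → Fin d → ℝ}

lemma tailNorm_eq_norm_comp_tailProj (T : FockH d P →L[ℂ] FockH d P) (n : ℕ) :
    tailNorm d P T n = ‖T ∘L tailProj (fun n => arvFiber d P n) n‖ := by
  have hle (f : {f : FockH d P // ‖f‖ ≤ 1 ∧ ∀ m < n, f m = 0}) :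
      ‖T f.1‖ ≤ ‖T ∘L tailProj (fun n => arvFiber d P n) n‖ := by
    have := (T ∘L tailProj (fun n => arvFiber d P n) n).unit_le_opNorm f.1 f.2.1
    rwa [ContinuousLinearMap.comp_apply, tailProj_apply_eq_self f.2.2] at this
  have : Nonempty {f : FockH d P // ‖f‖ ≤ 1 ∧ ∀ m < n, f m = 0} := ⟨0, by simp, fun _ _ => rfl⟩
  refine le_antisymm (ciSup_le hle) ?_
  refine ContinuousLinearMap.opNorm_le_of_unit_norm (Real.iSup_nonneg fun _ => norm_nonneg _)
    fun f hf => ?_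
  refine le_ciSup (f := fun f : {f : FockH d P // ‖f‖ ≤ 1 ∧ ∀ m < n, f m = 0} => ‖T f.1‖)
    ⟨_, Set.forall_mem_range.mpr hle⟩ ⟨tailProj _ n f, ?_, fun m hm => ?_⟩
  · exact (norm_tailProj_apply_le n f).trans hf.le
  · rw [tailProj_apply_coe, if_pos hm]

lemma inCuntzIdeal_iff_mem_tailVanishing (T : FockH d P →L[ℂ] FockH d P) :
    InCuntzIdeal d P T ↔ T ∈ tailVanishing (fun n => arvFiber d P n) (FockH d P) := by
  rw [mem_tailVanishing_iff_tendsto_norm, InCuntzIdeal, funext (tailNorm_eq_norm_comp_tailProj T)]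

end CuntzIdeal

end Tails

section Symbols

open Filter Topology

variable {E : ℕ → Type*} [∀ n, NormedAddCommGroup (E n)] [∀ n, NormedSpace ℂ (E n)]
  {L : Type*} [NormedAddCommGroup L] [NormedSpace ℂ L] {B : Type*} [Ring B] [Algebra ℂ B]
  {U : lp E 2 →ₗᵢ[ℂ] L} {M : B →ₐ[ℂ] (L →L[ℂ] L)} {S T : lp E 2 →L[ℂ] lp E 2} {a b : B}

/-- The operator `T` has asymptotic symbol `b`: the embedding `U` of the Fock space into the
model space `L` intertwines `T` with the model operator `M b`, up to an error vanishing on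
tails. -/
def HasSymbol (U : lp E 2 →ₗᵢ[ℂ] L) (M : B →ₐ[ℂ] (L →L[ℂ] L)) (T : lp E 2 →L[ℂ] lp E 2)
    (b : B) : Prop :=
  U.toContinuousLinearMap ∘L T - M b ∘L U.toContinuousLinearMap ∈ tailVanishing E L

lemma HasSymbol.add (hS : HasSymbol U M S a) (hT : HasSymbol U M T b) :
    HasSymbol U M (S + T) (a + b) := by
  have := add_mem hS hT
  rwa [sub_add_sub_comm, ← ContinuousLinearMap.comp_add, ← ContinuousLinearMap.add_comp,
    ← map_add] at this

lemma HasSymbol.mul (hS : HasSymbol U M S a) (hT : HasSymbol U M T b)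
    (hT' : T ∈ tailPreserving E) : HasSymbol U M (S * T) (a * b) := by
  have := add_mem (comp_mem_tailVanishing_of_mem_tailPreserving hS hT')
    (comp_mem_tailVanishing (M a) hT)
  rwa [ContinuousLinearMap.sub_comp, ContinuousLinearMap.comp_sub, ContinuousLinearMap.comp_assoc,
    ContinuousLinearMap.comp_assoc, sub_add_sub_cancel, ← ContinuousLinearMap.comp_assoc (M a),
    ← ContinuousLinearMap.mul_def (M a), ← map_mul] at this

lemma hasSymbol_algebraMap (U : lp E 2 →ₗᵢ[ℂ] L) (M : B →ₐ[ℂ] (L →L[ℂ] L)) (z : ℂ) :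
    HasSymbol U M (algebraMap ℂ _ z) (algebraMap ℂ B z) := by
  have : U.toContinuousLinearMap ∘L algebraMap ℂ (lp E 2 →L[ℂ] lp E 2) z =
      M (algebraMap ℂ B z) ∘L U.toContinuousLinearMap := by
    ext f
    simp [Algebra.algebraMap_eq_smul_one]
  rw [HasSymbol, this, sub_self]
  exact zero_mem _

lemma isometry_comp_mem_tailVanishing_iff :
    U.toContinuousLinearMap ∘L T ∈ tailVanishing E L ↔ T ∈ tailVanishing E (lp E 2) := by
  have hnorm (n : ℕ) : ‖(U.toContinuousLinearMap ∘L T) ∘L tailProj E n‖ = ‖T ∘L tailProj E n‖ := by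
    rw [ContinuousLinearMap.comp_assoc, U.norm_toContinuousLinearMap_comp]
  simp only [mem_tailVanishing_iff_tendsto_norm, hnorm]

lemma HasSymbol.mem_tailVanishing_iff (hT : HasSymbol U M T b) :
    T ∈ tailVanishing E (lp E 2) ↔
      M b ∘L U.toContinuousLinearMap ∈ tailVanishing E L := by
  rw [← isometry_comp_mem_tailVanishing_iff (U := U)]
  refine ⟨fun h => ?_, fun h => ?_⟩
  · rw [← sub_sub_cancel (U.toContinuousLinearMap ∘L T) (M b ∘L U.toContinuousLinearMap)]
    exact sub_mem h hT
  · rw [← add_sub_cancel (M b ∘L U.toContinuousLinearMap) (U.toContinuousLinearMap ∘L T)]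
    exact add_mem h hT

/-- The pairs `(T, b)` such that `T` has symbol `b` and asymptotically preserves tails. -/
noncomputable def symbolSubalgebra (U : lp E 2 →ₗᵢ[ℂ] L) (M : B →ₐ[ℂ] (L →L[ℂ] L)) :
    Subalgebra ℂ ((lp E 2 →L[ℂ] lp E 2) × B) where
  carrier := {x | HasSymbol U M x.1 x.2 ∧ x.1 ∈ tailPreserving E}
  mul_mem' hS hT := ⟨hS.1.mul hT.1 hT.2, mul_mem hS.2 hT.2⟩
  add_mem' hS hT := ⟨hS.1.add hT.1, add_mem hS.2 hT.2⟩
  algebraMap_mem' z := ⟨hasSymbol_algebraMap U M z, algebraMap_mem _ z⟩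

lemma mem_symbolSubalgebra {x : (lp E 2 →L[ℂ] lp E 2) × B} :
    x ∈ symbolSubalgebra U M ↔ HasSymbol U M x.1 x.2 ∧ x.1 ∈ tailPreserving E := Iff.rfl

lemma isClosed_symbolSubalgebra [TopologicalSpace B] (U : lp E 2 →ₗᵢ[ℂ] L) (hM : Continuous M) :
    IsClosed (symbolSubalgebra U M : Set ((lp E 2 →L[ℂ] lp E 2) × B)) := by
  have hsymbol : IsClosed {x : (lp E 2 →L[ℂ] lp E 2) × B | HasSymbol U M x.1 x.2} :=
    isClosed_tailVanishing.preimage <|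
      (continuous_const.clm_comp continuous_fst).sub
        ((hM.comp continuous_snd).clm_comp continuous_const)
  exact hsymbol.inter (isClosed_tailPreserving.preimage continuous_fst)

end Symbols

section StarCore

variable {A : Type*} [Ring A] [StarRing A] [Algebra ℂ A] [StarModule ℂ A] {S : Subalgebra ℂ A}

/-- The largest star subalgebra contained in the subalgebra `S`. -/
def starCore (S : Subalgebra ℂ A) : StarSubalgebra ℂ A where
  __ := S ⊓ star S
  star_mem' hx := ⟨hx.2, (S.star_mem_star_iff _).mpr hx.1⟩

lemma mem_starCore {x : A} : x ∈ starCore S ↔ x ∈ S ∧ star x ∈ S := Iff.rfl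

lemma isClosed_starCore [TopologicalSpace A] [ContinuousStar A] (hS : IsClosed (S : Set A)) :
    IsClosed (starCore S : Set A) :=
  hS.inter (hS.preimage continuous_star)

end StarCore

section CircleModel

open MeasureTheory AddCircle Filter
open scoped ENNReal

section Multiplication

variable {X : Type*} [TopologicalSpace X] [CompactSpace X] [MeasurableSpace X] [BorelSpace X]
  [SecondCountableTopologyEither X ℂ] (μ : Measure X) [IsFiniteMeasure μ]

/-- The operator of multiplication by a continuous function on `L²(μ)`, as a continuous linear
function of the multiplier. -/
noncomputable def mulLp : C(X, ℂ) →L[ℂ] (Lp ℂ 2 μ →L[ℂ] Lp ℂ 2 μ) :=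
  (ContinuousLinearMap.mul ℂ ℂ).holderL μ ⊤ 2 2 ∘L ContinuousMap.toLp ⊤ μ ℂ

lemma coeFn_mulLp (h : C(X, ℂ)) (f : Lp ℂ 2 μ) : mulLp μ h f =ᵐ[μ] fun x => h x * f x := by
  filter_upwards [(ContinuousLinearMap.mul ℂ ℂ).coeFn_holder (r := 2)
    (ContinuousMap.toLp (E := ℂ) ⊤ μ ℂ h) f,
    ContinuousMap.coeFn_toLp (p := ⊤) (𝕜 := ℂ) μ h] with x hx hh
  exact hx.trans (by rw [hh, ContinuousLinearMap.mul_apply'])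

lemma mulLp_one : mulLp μ 1 = 1 := by
  ext1 f
  refine Lp.ext ?_
  filter_upwards [coeFn_mulLp μ 1 f] with x hx
  rw [hx, ContinuousMap.one_apply, one_mul, one_apply_eq_self]

lemma mulLp_mul (g h : C(X, ℂ)) : mulLp μ (g * h) = mulLp μ g * mulLp μ h := by
  ext1 f
  refine Lp.ext ?_
  rw [mul_apply_eq_comp]
  filter_upwards [coeFn_mulLp μ (g * h) f, coeFn_mulLp μ g (mulLp μ h f), coeFn_mulLp μ h f]
    with x hgh hg hh
  rw [hgh, hg, hh, ContinuousMap.mul_apply, mul_assoc]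

/-- The representation of `C(X)` on `L²(μ)` by multiplication operators. -/
noncomputable def multiplicationRep : C(X, ℂ) →ₐ[ℂ] (Lp ℂ 2 μ →L[ℂ] Lp ℂ 2 μ) :=
  AlgHom.ofLinearMap (mulLp μ).toLinearMap (mulLp_one μ) (mulLp_mul μ)

lemma continuous_multiplicationRep : Continuous (multiplicationRep μ) := (mulLp μ).continuous

lemma multiplicationRep_toLp (g h : C(X, ℂ)) :
    multiplicationRep μ g (ContinuousMap.toLp 2 μ ℂ h) = ContinuousMap.toLp 2 μ ℂ (g * h) := by
  refine Lp.ext ?_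
  filter_upwards [coeFn_mulLp μ g (ContinuousMap.toLp 2 μ ℂ h),
    ContinuousMap.coeFn_toLp (p := 2) (𝕜 := ℂ) μ h,
    ContinuousMap.coeFn_toLp (p := 2) (𝕜 := ℂ) μ (g * h)] with x hg hh hgh
  rw [hgh, ContinuousMap.mul_apply, ← hh]
  exact hg

end Multiplication

section Fourier

variable {T : ℝ} [Fact (0 < T)]

lemma multiplicationRep_fourier_fourierLp (m n : ℤ) :
    multiplicationRep (haarAddCircle (T := T)) (fourier m) (fourierLp 2 n) =
      fourierLp 2 (m + n) := by
  rw [fourierLp, multiplicationRep_toLp]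
  congr 1
  ext x
  exact fourier_add.symm

lemma norm_multiplicationRep_fourierLp (h : C(AddCircle T, ℂ)) (n : ℤ) :
    ‖multiplicationRep haarAddCircle h (fourierLp 2 n)‖ =
      ‖ContinuousMap.toLp (E := ℂ) 2 haarAddCircle ℂ h‖ := by
  rw [fourierLp, multiplicationRep_toLp, Lp.norm_def, Lp.norm_def]
  congr 1
  refine eLpNorm_congr_norm_ae ?_
  filter_upwards [ContinuousMap.coeFn_toLp (p := 2) (𝕜 := ℂ) haarAddCircle h,
    ContinuousMap.coeFn_toLp (p := 2) (𝕜 := ℂ) haarAddCircle (h * fourier n)] with x hh hhn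
  rw [hh, hhn, ContinuousMap.mul_apply, norm_mul, fourier_apply, Circle.norm_coe, mul_one]

lemma eq_zero_of_forall_exists_norm_multiplicationRep_fourierLp_le {h : C(AddCircle T, ℂ)}
    (hh : ∀ ε > 0, ∃ n : ℤ, ‖multiplicationRep haarAddCircle h (fourierLp 2 n)‖ ≤ ε) :
    h = 0 := by
  simp only [norm_multiplicationRep_fourierLp, exists_const] at hh
  have hzero : ContinuousMap.toLp (E := ℂ) 2 haarAddCircle ℂ h = 0 :=
    norm_le_zero_iff.mp (le_of_forall_pos_le_add fun ε hε => by simpa using hh ε hε)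
  exact ContinuousMap.toLp_injective haarAddCircle (hzero.trans (map_zero _).symm)

end Fourier

section MatrixRep

variable {n m R K : Type*} [Fintype n] [Fintype m] [NormedAddCommGroup K] [NormedSpace ℂ K]

section Operator

variable [Ring R] [Algebra ℂ R]

/-- The operator matrix `(ρ (g i j))` acting on the first index of a family of vectors indexed
by `n × m`. -/
noncomputable def matrixOperator (ρ : R →ₐ[ℂ] (K →L[ℂ] K)) (m : Type*) [Fintype m]
    (g : CStarMatrix n n R) :
    PiLp 2 (fun _ : n × m => K) →L[ℂ] PiLp 2 (fun _ : n × m => K) :=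
  (PiLp.continuousLinearEquiv 2 ℂ fun _ : n × m => K).symm.toContinuousLinearMap ∘L
    .pi fun p => ∑ j, ρ (g p.1 j) ∘L PiLp.proj 2 _ (j, p.2)

lemma matrixOperator_apply (ρ : R →ₐ[ℂ] (K →L[ℂ] K)) (g : CStarMatrix n n R)
    (F : PiLp 2 fun _ : n × m => K) (p : n × m) :
    matrixOperator ρ m g F p = ∑ j, ρ (g p.1 j) (F (j, p.2)) := by
  simp [matrixOperator]

/-- The amplification of a representation `ρ` of `R` to a representation of the matrices over
`R`. -/
noncomputable def matrixRep [DecidableEq n] (ρ : R →ₐ[ℂ] (K →L[ℂ] K)) (m : Type*) [Fintype m] :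
    CStarMatrix n n R →ₐ[ℂ]
      (PiLp 2 (fun _ : n × m => K) →L[ℂ] PiLp 2 (fun _ : n × m => K)) :=
  AlgHom.ofLinearMap
    { toFun := matrixOperator ρ m
      map_add' := fun g h => by
        ext F p
        simp [matrixOperator_apply, Finset.sum_add_distrib]
      map_smul' := fun z g => by
        ext F p
        simp [matrixOperator_apply, Finset.smul_sum] }
    (by
      ext F p
      rw [LinearMap.coe_mk, AddHom.coe_mk, matrixOperator_apply, Finset.sum_eq_single p.1]
      · simp
      · intro j _ hj
        simp [CStarMatrix.one_apply_ne hj.symm]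
      · simp)
    fun g h => by
      ext F p
      simp only [LinearMap.coe_mk, AddHom.coe_mk, mul_apply_eq_comp, matrixOperator_apply,
        CStarMatrix.mul_apply, map_sum, map_mul, _root_.sum_apply]
      exact Finset.sum_comm

lemma matrixRep_apply [DecidableEq n] (ρ : R →ₐ[ℂ] (K →L[ℂ] K)) (g : CStarMatrix n n R)
    (F : PiLp 2 fun _ : n × m => K) (p : n × m) :
    matrixRep ρ m g F p = ∑ j, ρ (g p.1 j) (F (j, p.2)) := matrixOperator_apply ρ g F p

end Operator

lemma continuous_matrixRep [DecidableEq n] [CStarAlgebra R] [PartialOrder R] [StarOrderedRing R]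
    {ρ : R →ₐ[ℂ] (K →L[ℂ] K)} (hρ : Continuous ρ) : Continuous (matrixRep (n := n) ρ m) := by
  classical
  have hsum (g : CStarMatrix n n R) : matrixRep ρ m g = ∑ p : n × m, ∑ j,
      ((PiLp.continuousLinearEquiv 2 ℂ fun _ : n × m => K).symm.toContinuousLinearMap ∘L
        .single ℂ (fun _ : n × m => K) p) ∘L ρ (g p.1 j) ∘L PiLp.proj 2 _ (j, p.2) := by
    ext F p
    simp [matrixRep_apply, Finset.sum_apply, Pi.single_apply]
  rw [funext hsum]
  refine continuous_finsetSum _ fun p _ => continuous_finsetSum _ fun j _ => ?_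
  have hentry : Continuous fun g : CStarMatrix n n R => g p.1 j :=
    (continuous_apply j).comp (continuous_apply p.1)
  exact continuous_const.clm_comp ((hρ.comp hentry).clm_comp continuous_const)

end MatrixRep

end CircleModel

section GradedModel

open MeasureTheory AddCircle Filter
open scoped ENNReal InnerProductSpace ComplexOrder

variable {Ω : Type*} [Fintype Ω]

/-- The space `ℂ^(Ω × Ω) ⊗ L²(𝕋)`, on which the matrices over `C(𝕋)` act by multiplication in the
first index. -/
abbrev CircleModel (Ω : Type*) : Type _ :=
  PiLp 2 fun _ : Ω × Ω => Lp ℂ 2 (haarAddCircle (T := (1 : ℝ)))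

/-- The exponent of the character attached to the entry `(i, j)` in degree `m`. For a cyclic
index `c` of period `r` the division is exact wherever `P ^ m` has a nonzero entry. -/
def fourierDegree (c : Ω → ℤ) (r : ℕ) (m : ℤ) (i j : Ω) : ℤ := (m + c i - c j) / r

/-- The matrices supported on the entries that a cyclic index `c` of period `r` allows in
degree `m`. -/
def cyclicFiber (c : Ω → ℤ) (r : ℕ) (m : ℤ) : Submodule ℂ (EuclideanSpace ℂ (Ω × Ω)) where
  carrier := {v | ∀ p, ¬ (r : ℤ) ∣ m + c p.1 - c p.2 → v p = 0}
  add_mem' hv hw p hp := by rw [PiLp.add_apply, hv p hp, hw p hp, add_zero]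
  zero_mem' _ _ := rfl
  smul_mem' z v hv p hp := by rw [PiLp.smul_apply, hv p hp, smul_zero]

variable {c : Ω → ℤ} {r : ℕ} {m n : ℤ}

omit [Fintype Ω] in
lemma mem_cyclicFiber {v : EuclideanSpace ℂ (Ω × Ω)} :
    v ∈ cyclicFiber c r m ↔ ∀ p, ¬ (r : ℤ) ∣ m + c p.1 - c p.2 → v p = 0 := Iff.rfl

section Embedding

/-- The isometry of the degree `m` part of the Fock space into the model, attaching to each
entry the character of its degree. -/
noncomputable def gradedEmbedding (c : Ω → ℤ) (r : ℕ) (m : ℤ) :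
    EuclideanSpace ℂ (Ω × Ω) →ₗᵢ[ℂ] CircleModel Ω where
  toFun v := WithLp.toLp 2 fun p => v p • fourierLp 2 (fourierDegree c r m p.1 p.2)
  map_add' v w := by ext1; simp [add_smul]
  map_smul' z v := by ext1; simp [mul_smul]
  norm_map' v := by
    rw [PiLp.norm_eq_of_L2, EuclideanSpace.norm_eq]
    simp [norm_smul, orthonormal_fourier.1]

lemma gradedEmbedding_apply (v : EuclideanSpace ℂ (Ω × Ω)) (p : Ω × Ω) :
    gradedEmbedding c r m v p = v p • fourierLp 2 (fourierDegree c r m p.1 p.2) := rfl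

lemma inner_gradedEmbedding_eq_zero {v w : EuclideanSpace ℂ (Ω × Ω)} (hmn : m ≠ n)
    (hv : v ∈ cyclicFiber c r m) (hw : w ∈ cyclicFiber c r n) :
    ⟪gradedEmbedding c r m v, gradedEmbedding c r n w⟫_ℂ = 0 := by
  rw [PiLp.inner_apply]
  refine Finset.sum_eq_zero fun p _ => ?_
  rw [gradedEmbedding_apply, gradedEmbedding_apply, inner_smul_left, inner_smul_right]
  by_cases hm : (r : ℤ) ∣ m + c p.1 - c p.2
  · by_cases hn : (r : ℤ) ∣ n + c p.1 - c p.2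
    · have hne : fourierDegree c r m p.1 p.2 ≠ fourierDegree c r n p.1 p.2 := fun h => hmn <| by
        have := congrArg (· * (r : ℤ)) h
        simp only [fourierDegree, Int.ediv_mul_cancel hm, Int.ediv_mul_cancel hn] at this
        lia
      rw [orthonormal_fourier.2 hne, mul_zero, mul_zero]
    · rw [mem_cyclicFiber.mp hw p hn, zero_mul, mul_zero]
  · rw [mem_cyclicFiber.mp hv p hm, map_zero, zero_mul]

variable {F : ℕ → Submodule ℂ (EuclideanSpace ℂ (Ω × Ω))}

lemma orthogonalFamily_gradedEmbedding (hF : ∀ k, F k ≤ cyclicFiber c r k) :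
    OrthogonalFamily ℂ (fun k => F k)
      fun k : ℕ => (gradedEmbedding c r k).comp (F k).subtypeₗᵢ :=
  fun _ _ hjk v w => inner_gradedEmbedding_eq_zero (Nat.cast_injective.ne hjk)
    (hF _ v.2) (hF _ w.2)

/-- The embedding of a Fock space whose fibers respect a cyclic index into the model. -/
noncomputable def fockEmbedding (hF : ∀ k, F k ≤ cyclicFiber c r k) :
    lp (fun k => F k) 2 →ₗᵢ[ℂ] CircleModel Ω :=
  (orthogonalFamily_gradedEmbedding hF).linearIsometry

lemma fockEmbedding_single (hF : ∀ k, F k ≤ cyclicFiber c r k) (k : ℕ) (v : F k) :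
    fockEmbedding hF (lp.single 2 k v) = gradedEmbedding c r k v :=
  (orthogonalFamily_gradedEmbedding hF).linearIsometry_apply_single v

end Embedding

section LeftAction

/-- Multiplication of a matrix `v` from the left by `C`, where the coefficient `C i j l` may also
depend on the column `l` of `v`. -/
noncomputable def leftAct (C : Ω → Ω → Ω → ℂ) :
    EuclideanSpace ℂ (Ω × Ω) →L[ℂ] EuclideanSpace ℂ (Ω × Ω) :=
  LinearMap.toContinuousLinearMap
    { toFun := fun v => WithLp.toLp 2 fun p => ∑ j, C p.1 j p.2 * v (j, p.2)
      map_add' := fun v w => by ext; simp [mul_add, Finset.sum_add_distrib]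
      map_smul' := fun z v => by ext; simp [Finset.mul_sum, mul_left_comm] }

lemma leftAct_apply (C : Ω → Ω → Ω → ℂ) (v : EuclideanSpace ℂ (Ω × Ω)) (p : Ω × Ω) :
    leftAct C v p = ∑ j, C p.1 j p.2 * v (j, p.2) := rfl

lemma leftAct_sub (C D : Ω → Ω → Ω → ℂ) : leftAct (C - D) = leftAct C - leftAct D := by
  ext v p
  simp [leftAct_apply, sub_mul, Finset.sum_sub_distrib]

lemma leftAct_mem_cyclicFiber {C : Ω → Ω → Ω → ℂ} {v : EuclideanSpace ℂ (Ω × Ω)}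
    (hC : ∀ i j l, ¬ (r : ℤ) ∣ m + c i - c j → C i j l = 0) (hv : v ∈ cyclicFiber c r n) :
    leftAct C v ∈ cyclicFiber c r (m + n) := by
  refine mem_cyclicFiber.mpr fun p hp => ?_
  rw [leftAct_apply]
  refine Finset.sum_eq_zero fun j _ => ?_
  by_cases hj : (r : ℤ) ∣ m + c p.1 - c j
  · rw [mem_cyclicFiber.mp hv (j, p.2) fun hn => hp ?_, mul_zero]
    have := dvd_add hj hn
    ring_nf at this ⊢
    exact this
  · rw [hC _ _ _ hj, zero_mul]

lemma inner_leftAct_left (C : Ω → Ω → Ω → ℂ) (v w : EuclideanSpace ℂ (Ω × Ω)) :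
    ⟪leftAct C v, w⟫_ℂ = ⟪v, leftAct (fun i j l => star (C j i l)) w⟫_ℂ := by
  simp only [PiLp.inner_apply, leftAct_apply, Fintype.sum_prod_type_right, RCLike.inner_apply,
    map_sum, map_mul, Finset.mul_sum, Finset.sum_mul]
  refine Finset.sum_congr rfl fun l _ => ?_
  rw [Finset.sum_comm]
  refine Finset.sum_congr rfl fun j _ => Finset.sum_congr rfl fun i _ => ?_
  simp only [RCLike.star_def]
  ring

lemma norm_leftAct_apply_le {C : Ω → Ω → Ω → ℂ} {v : EuclideanSpace ℂ (Ω × Ω)} {δ : ℝ}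
    (hδ : 0 ≤ δ) (hC : ∀ i j l, v (j, l) ≠ 0 → ‖C i j l‖ ≤ δ) :
    ‖leftAct C v‖ ≤ Fintype.card Ω ^ 3 * δ * ‖v‖ := by
  classical
  have hterm (i j l : Ω) : ‖C i j l * v (j, l)‖ ≤ δ * ‖v‖ := by
    by_cases hv : v (j, l) = 0
    · rw [hv, mul_zero, norm_zero]
      positivity
    · rw [norm_mul]
      exact mul_le_mul (hC i j l hv) (PiLp.norm_apply_le v _) (norm_nonneg _) hδ
  calc ‖leftAct C v‖ = ‖∑ p, EuclideanSpace.single p (leftAct C v p)‖ := by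
        congr 1
        ext p
        simp
    _ ≤ ∑ p, ‖EuclideanSpace.single p (leftAct C v p)‖ := norm_sum_le _ _
    _ = ∑ p, ‖leftAct C v p‖ := by simp only [PiLp.norm_single]
    _ ≤ ∑ _p : Ω × Ω, ∑ _j : Ω, δ * ‖v‖ := by
        gcongr with p
        exact norm_sum_le_of_le _ fun j _ => hterm p.1 j p.2
    _ = Fintype.card Ω ^ 3 * δ * ‖v‖ := by
        simp [Fintype.card_prod]
        ring

end LeftAction

section Symbol

variable [DecidableEq Ω] {B : Ω → Ω → ℂ}

/-- The action of the matrices over `C(𝕋)` on the model space. -/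
noncomputable abbrev modelRep (Ω : Type*) [Fintype Ω] [DecidableEq Ω] :
    CStarMatrix Ω Ω C(UnitAddCircle, ℂ) →ₐ[ℂ] (CircleModel Ω →L[ℂ] CircleModel Ω) :=
  matrixRep (multiplicationRep haarAddCircle) Ω

/-- The model counterpart of the degree `s` matrix `B`. -/
noncomputable def symbolMatrix (c : Ω → ℤ) (r : ℕ) (s : ℤ) (B : Ω → Ω → ℂ) :
    CStarMatrix Ω Ω C(UnitAddCircle, ℂ) :=
  CStarMatrix.ofMatrix fun i j => B i j • fourier (fourierDegree c r s i j)

omit [Fintype Ω] [DecidableEq Ω] in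
lemma symbolMatrix_apply (c : Ω → ℤ) (r : ℕ) (s : ℤ) (B : Ω → Ω → ℂ) (i j : Ω) :
    symbolMatrix c r s B i j = B i j • fourier (fourierDegree c r s i j) := rfl

omit [Fintype Ω] [DecidableEq Ω] in
lemma star_symbolMatrix {s : ℤ} (hB : ∀ i j, ¬ (r : ℤ) ∣ s + c i - c j → B i j = 0) :
    star (symbolMatrix c r s B) = symbolMatrix c r (-s) fun i j => star (B j i) := by
  refine CStarMatrix.ext fun i j => ?_
  rw [CStarMatrix.star_apply, symbolMatrix_apply, symbolMatrix_apply, star_smul]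
  by_cases hdvd : (r : ℤ) ∣ s + c j - c i
  · have hdeg : fourierDegree c r (-s) i j = -fourierDegree c r s j i := by
      rw [fourierDegree, fourierDegree, ← Int.neg_ediv_of_dvd hdvd]
      congr 1
      ring
    rw [hdeg]
    congr 1
    ext x
    exact fourier_neg.symm
  · ext x
    simp [hB j i hdvd]

lemma modelRep_symbolMatrix_gradedEmbedding {s : ℤ}
    (hB : ∀ i j, ¬ (r : ℤ) ∣ s + c i - c j → B i j = 0) (v : EuclideanSpace ℂ (Ω × Ω)) :
    modelRep Ω (symbolMatrix c r s B) (gradedEmbedding c r m v) =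
      gradedEmbedding c r (s + m) (leftAct (fun i j _ => B i j) v) := by
  ext p : 1
  rw [matrixRep_apply, gradedEmbedding_apply, leftAct_apply, Finset.sum_smul]
  refine Finset.sum_congr rfl fun j _ => ?_
  rw [gradedEmbedding_apply, map_smul, symbolMatrix_apply, map_smul, _root_.smul_apply,
    multiplicationRep_fourier_fourierLp, smul_smul, mul_comm]
  by_cases hdvd : (r : ℤ) ∣ s + c p.1 - c j
  · rw [fourierDegree, fourierDegree, fourierDegree, ← Int.add_ediv_of_dvd_left hdvd]
    congr 3
    ring
  · rw [hB _ _ hdvd, zero_mul, zero_smul, zero_smul]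

variable {F : ℕ → Submodule ℂ (EuclideanSpace ℂ (Ω × Ω))}

lemma hasSymbol_symbolMatrix (hF : ∀ k, F k ≤ cyclicFiber c r k)
    {T : lp (fun k => F k) 2 →L[ℂ] lp (fun k => F k) 2} {s : ℤ}
    (hB : ∀ i j, ¬ (r : ℤ) ∣ s + c i - c j → B i j = 0)
    (hgraded : ∀ (k : ℕ) (v : F k), ∃ w ∈ cyclicFiber c r (s + k),
      fockEmbedding hF (T (lp.single 2 k v)) = gradedEmbedding c r (s + k) w)
    (hdecay : ∀ ε > 0, ∀ᶠ k : ℕ in atTop, ∀ v : F k, ‖fockEmbedding hF (T (lp.single 2 k v)) -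
      gradedEmbedding c r (s + k) (leftAct (fun i j _ => B i j) v)‖ ≤ ε * ‖v‖) :
    HasSymbol (fockEmbedding hF) (modelRep Ω) T (symbolMatrix c r s B) := by
  have hmodel (k : ℕ) (v : F k) :
      modelRep Ω (symbolMatrix c r s B) (fockEmbedding hF (lp.single 2 k v)) =
        gradedEmbedding c r (s + k) (leftAct (fun i j _ => B i j) v) := by
    rw [fockEmbedding_single, modelRep_symbolMatrix_gradedEmbedding hB]
  have hmem (k : ℕ) (v : F k) : leftAct (fun i j _ => B i j) v ∈ cyclicFiber c r (s + k) :=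
    leftAct_mem_cyclicFiber (fun i j _ => hB i j) (hF k v.2)
  refine mem_tailVanishing_of_pairwise_inner_eq_zero (fun f j k hjk => ?_) fun ε hε => ?_
  · obtain ⟨w, hw, hTw⟩ := hgraded j (f j)
    obtain ⟨w', hw', hTw'⟩ := hgraded k (f k)
    simp only [_root_.sub_apply, ContinuousLinearMap.comp_apply,
      LinearIsometry.coe_toContinuousLinearMap, hmodel, hTw, hTw', ← map_sub]
    refine inner_gradedEmbedding_eq_zero (by simpa using hjk) ?_ ?_
    exacts [sub_mem hw (hmem j _), sub_mem hw' (hmem k _)]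
  · filter_upwards [hdecay ε hε] with k hk v
    simpa only [_root_.sub_apply, ContinuousLinearMap.comp_apply,
      LinearIsometry.coe_toContinuousLinearMap, hmodel] using hk v

lemma eq_zero_of_modelRep_comp_mem_tailVanishing (hF : ∀ k, F k ≤ cyclicFiber c r k)
    (hdiag : ∀ j, ∃ᶠ k in atTop, EuclideanSpace.single (j, j) 1 ∈ F k)
    {b : CStarMatrix Ω Ω C(UnitAddCircle, ℂ)}
    (hb : modelRep Ω b ∘L (fockEmbedding hF).toContinuousLinearMap ∈
      tailVanishing (fun k => F k) (CircleModel Ω)) : b = 0 := by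
  refine CStarMatrix.ext fun i j => ?_
  refine eq_zero_of_forall_exists_norm_multiplicationRep_fourierLp_le fun ε hε => ?_
  obtain ⟨k, hjk, hk⟩ := ((hdiag j).and_eventually (eventually_norm_apply_single_le hb hε)).exists
  refine ⟨fourierDegree c r k j j, ?_⟩
  have hentry : modelRep Ω b (gradedEmbedding c r k (EuclideanSpace.single (j, j) 1)) (i, j) =
      multiplicationRep haarAddCircle (b i j) (fourierLp 2 (fourierDegree c r k j j)) := by
    rw [matrixRep_apply, Finset.sum_eq_single j]
    · simp [gradedEmbedding_apply]
    · intro l _ hl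
      simp [gradedEmbedding_apply, hl]
    · simp
  have := hk ⟨_, hjk⟩
  rw [ContinuousLinearMap.comp_apply, LinearIsometry.coe_toContinuousLinearMap,
    fockEmbedding_single] at this
  rw [← hentry]
  refine (PiLp.norm_apply_le _ _).trans (this.trans_eq ?_)
  simp

end Symbol

end GradedModel

section Shifts

open Filter
open ContinuousLinearMap (adjoint)
open scoped InnerProductSpace

lemma orthogonalFamily_lp_single {ι : Type*} [DecidableEq ι] {G : ι → Type*}
    [∀ i, NormedAddCommGroup (G i)] [∀ i, InnerProductSpace ℂ (G i)] :
    OrthogonalFamily ℂ G fun i =>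
      (⟨lp.lsingle 2 i, fun v => lp.norm_single (by norm_num) i v⟩ : G i →ₗᵢ[ℂ] lp G 2) := by
  intro i j hij v w
  change ⟪lp.single 2 i v, lp.single 2 j w⟫_ℂ = 0
  rw [lp.inner_single_left, lp.single_apply_ne _ _ _ hij, inner_zero_right]

section GradedShift

variable {H : Type*} [NormedAddCommGroup H] [InnerProductSpace ℂ H] {E : ℕ → Submodule ℂ H} {n : ℕ}
  {Λ : ∀ k, E k →L[ℂ] E (n + k)} {T : lp (fun k => E k) 2 →L[ℂ] lp (fun k => E k) 2}

/-- `T` is homogeneous of degree `n`, with component `Λ k` from degree `k` to degree `n + k`. -/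
def IsGradedShift (n : ℕ) (Λ : ∀ k, E k →L[ℂ] E (n + k))
    (T : lp (fun k => E k) 2 →L[ℂ] lp (fun k => E k) 2) : Prop :=
  ∀ f : lp (fun k => E k) 2, (∀ m < n, T f m = 0) ∧ ∀ k, T f (n + k) = Λ k (f k)

lemma IsGradedShift.apply_single (hT : IsGradedShift n Λ T) (k : ℕ) (v : E k) :
    T (lp.single 2 k v) = lp.single 2 (n + k) (Λ k v) := by
  refine lp.ext (funext fun m => ?_)
  rcases lt_or_ge m n with hmn | hmn
  · rw [(hT _).1 m hmn, lp.single_apply_ne _ _ _ (by lia)]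
  · obtain ⟨l, rfl⟩ := Nat.exists_eq_add_of_le hmn
    rw [(hT _).2 l]
    rcases eq_or_ne l k with rfl | hlk
    · rw [lp.single_apply_self, lp.single_apply_self]
    · rw [lp.single_apply_ne _ _ _ hlk, lp.single_apply_ne _ _ _ (by lia), map_zero]

lemma IsGradedShift.mem_tailPreserving (hT : IsGradedShift n Λ T) :
    T ∈ tailPreserving (fun k => E k) := by
  refine fun m => mem_tailVanishing_of_forall_eq_zero (N := m + 1) fun f hf => ?_
  change T f m = 0
  rcases lt_or_ge m n with hmn | hmn
  · exact (hT f).1 m hmn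
  · obtain ⟨k, rfl⟩ := Nat.exists_eq_add_of_le hmn
    rw [(hT f).2 k, hf k (by lia), map_zero]

section CompleteFibers

variable [∀ n, CompleteSpace (E n)]

lemma IsGradedShift.star_apply (hT : IsGradedShift n Λ T) (f : lp (fun k => E k) 2) (k : ℕ) :
    star T f k = adjoint (Λ k) (f (n + k)) := by
  refine ext_inner_left ℂ fun v : E k => ?_
  rw [ContinuousLinearMap.star_eq_adjoint, ContinuousLinearMap.adjoint_inner_right,
    ← lp.inner_single_left (G := fun k => E k), ContinuousLinearMap.adjoint_inner_right,
    hT.apply_single, lp.inner_single_left]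

lemma IsGradedShift.star_apply_single_of_lt (hT : IsGradedShift n Λ T) {m : ℕ} (hm : m < n)
    (v : E m) : star T (lp.single 2 m v) = 0 := by
  refine lp.ext (funext fun k => ?_)
  rw [hT.star_apply, lp.single_apply_ne _ _ _ (by lia), map_zero, lp.coeFn_zero, Pi.zero_apply]

lemma IsGradedShift.star_apply_single (hT : IsGradedShift n Λ T) (k : ℕ) (v : E (n + k)) :
    star T (lp.single 2 (n + k) v) = lp.single 2 k (adjoint (Λ k) v) := by
  refine lp.ext (funext fun l => ?_)
  rw [hT.star_apply]
  rcases eq_or_ne l k with rfl | hlk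
  · rw [lp.single_apply_self, lp.single_apply_self]
  · rw [lp.single_apply_ne _ _ _ hlk, lp.single_apply_ne _ _ _ (by lia), map_zero]

lemma IsGradedShift.star_mem_tailPreserving (hT : IsGradedShift n Λ T) :
    star T ∈ tailPreserving (fun k => E k) := by
  refine fun k => mem_tailVanishing_of_forall_eq_zero (N := n + k + 1) fun f hf => ?_
  change star T f k = 0
  rw [hT.star_apply, hf _ (by lia), map_zero]

lemma exists_isGradedShift {K : ℝ} (hΛ : ∀ k, ‖Λ k‖ ≤ K) :
    ∃ T : lp (fun k => E k) 2 →L[ℂ] lp (fun k => E k) 2, IsGradedShift n Λ T := by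
  have hK : 0 ≤ K := (norm_nonneg (Λ 0)).trans (hΛ 0)
  have horth := (orthogonalFamily_lp_single (G := fun k => E k)).comp (add_right_injective n)
  refine ⟨horth.linearIsometry.toContinuousLinearMap ∘L lp.mapCLM 2 Λ hK hΛ, fun f => ?_⟩
  have hsum (m : ℕ) := (lp.evalCLM ℂ (fun k => E k) 2 m).hasSum
    (horth.hasSum_linearIsometry (lp.mapCLM 2 Λ hK hΛ f))
  refine ⟨fun m hm => (hsum m).unique ?_, fun k => (hsum (n + k)).unique ?_⟩
  · convert hasSum_zero with k
    exact lp.single_apply_ne 2 _ _ (by lia)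
  · convert! hasSum_single k fun l hl => ?_
    · exact (lp.single_apply_self (E := fun k => E k) 2 (n + k) _).symm
    · exact lp.single_apply_ne 2 _ _ (by lia)

end CompleteFibers

end GradedShift

section ArvShift

variable {d : ℕ} {P : Fin d → Fin d → ℝ} {n : ℕ} {A : Fin d → Fin d → ℂ}
  {T : FockH d P →L[ℂ] FockH d P}

lemma IsStochastic.norm_arvCoef_le_one (hP : IsStochastic P) (n k : ℕ) (i j l : Fin d) :
    ‖arvCoef d P n k i j l‖ ≤ 1 := by
  unfold arvCoef
  split_ifs with hpos
  · rw [Complex.norm_real, Real.norm_of_nonneg (by positivity),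
      div_le_one (Real.sqrt_pos.mpr hpos)]
    exact Real.sqrt_le_sqrt (hP.mul_le_stochPow_add n k i j l)
  · simp

lemma IsStochastic.arvCoef_eq_zero (hP : IsStochastic P) {k : ℕ} {j l : Fin d}
    (hjl : ¬ 0 < stochPow P k j l) (n : ℕ) (i : Fin d) : arvCoef d P n k i j l = 0 := by
  have hzero : stochPow P k j l = 0 := le_antisymm (not_lt.mp hjl) ((hP.pow k).1 j l)
  simp [arvCoef, hzero]

/-- The component from degree `k` to degree `n + k` of the shift by `A ∈ Arv(P)_n`. -/
noncomputable def arvShift (P : Fin d → Fin d → ℝ) (n : ℕ) (A : Fin d → Fin d → ℂ) (k : ℕ) :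
    arvFiber d P k →L[ℂ] arvFiber d P (n + k) :=
  (leftAct (fun i j l => arvCoef d P n k i j l * A i j) ∘L (arvFiber d P k).subtypeL).codRestrict
    (arvFiber d P (n + k)) fun v p hp => by simp [leftAct_apply, arvCoef, hp]

lemma coe_arvShift_apply (P : Fin d → Fin d → ℝ) (n : ℕ) (A : Fin d → Fin d → ℂ) (k : ℕ)
    (v : arvFiber d P k) :
    (arvShift P n A k v : EuclideanSpace ℂ (Fin d × Fin d)) =
      leftAct (fun i j l => arvCoef d P n k i j l * A i j) v := rfl

/-- `T` is the shift `S^{(n)}_A` by `A ∈ Arv(P)_n`. -/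
abbrev IsArvShift (n : ℕ) (A : Fin d → Fin d → ℂ) (T : FockH d P →L[ℂ] FockH d P) : Prop :=
  IsGradedShift (E := arvFiber d P) n (arvShift P n A) T

/-- The adjoint of `arvShift P n A k`. -/
noncomputable abbrev arvShiftAdjoint (P : Fin d → Fin d → ℝ) (n : ℕ) (A : Fin d → Fin d → ℂ)
    (k : ℕ) : arvFiber d P (n + k) →L[ℂ] arvFiber d P k :=
  adjoint (𝕜 := ℂ) (E := arvFiber d P k) (F := arvFiber d P (n + k)) (arvShift P n A k)

lemma coe_arvShiftAdjoint_apply (hP : IsStochastic P) (n : ℕ) (A : Fin d → Fin d → ℂ) (k : ℕ)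
    (v : arvFiber d P (n + k)) :
    (arvShiftAdjoint P n A k v : EuclideanSpace ℂ (Fin d × Fin d)) =
      leftAct (fun i j l => star (arvCoef d P n k j i l * A j i)) v := by
  have hmem : leftAct (fun i j l => star (arvCoef d P n k j i l * A j i)) v ∈ arvFiber d P k :=
    fun p hp => by simp [leftAct_apply, hP.arvCoef_eq_zero hp]
  suffices arvShiftAdjoint P n A k v = ⟨_, hmem⟩ from congrArg Subtype.val this
  refine ext_inner_left ℂ fun w => ?_
  rw [ContinuousLinearMap.adjoint_inner_right, Submodule.coe_inner, Submodule.coe_inner,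
    coe_arvShift_apply, inner_leftAct_left]

lemma IsStochastic.exists_forall_norm_arvShift_le (hP : IsStochastic P) (n : ℕ)
    (A : Fin d → Fin d → ℂ) : ∃ K, ∀ k, ‖arvShift P n A k‖ ≤ K := by
  obtain ⟨C, hC⟩ := (Set.finite_range fun p : Fin d × Fin d => ‖A p.1 p.2‖).bddAbove
  have hA (i j : Fin d) : ‖A i j‖ ≤ max C 0 := (hC ⟨(i, j), rfl⟩).trans (le_max_left _ _)
  refine ⟨Fintype.card (Fin d) ^ 3 * max C 0, fun k => ?_⟩
  have hcoef (i j l : Fin d) : ‖arvCoef d P n k i j l * A i j‖ ≤ max C 0 := by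
    rw [norm_mul]
    exact (mul_le_of_le_one_left (norm_nonneg _) (hP.norm_arvCoef_le_one n k i j l)).trans (hA i j)
  refine ContinuousLinearMap.opNorm_le_bound _ (by positivity) fun v => ?_
  rw [Submodule.coe_norm, coe_arvShift_apply, Submodule.coe_norm]
  exact norm_leftAct_apply_le (le_max_right _ _) fun i j l _ => hcoef i j l

lemma IsStochastic.exists_isArvShift (hP : IsStochastic P) (n : ℕ)
    (A : Fin d → Fin d → ℂ) :
    ∃ T : FockH d P →L[ℂ] FockH d P, IsArvShift n A T :=
  (hP.exists_forall_norm_arvShift_le n A).elim fun _ hK =>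
    exists_isGradedShift (E := arvFiber d P) (Λ := arvShift P n A) hK

lemma isShiftOp_iff : IsShiftOp d P T ↔ ∃ (n : ℕ) (A : Fin d → Fin d → ℂ),
    (∀ i j, ¬ 0 < stochPow P n i j → A i j = 0) ∧ IsArvShift n A T := by
  simp only [IsShiftOp, IsGradedShift, Subtype.ext_iff, PiLp.ext_iff]
  rfl

lemma IsDiagOp.isShiftOp (hT : IsDiagOp d P T) : IsShiftOp d P T := by
  obtain ⟨a, ha⟩ := hT
  refine ⟨0, fun i j => if i = j then a i else 0, fun i j hij => if_neg ?_, fun f =>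
    ⟨fun m hm => absurd hm m.not_lt_zero, fun k p => ?_⟩⟩
  · rintro rfl
    simp [stochPow] at hij
  · have hdeg (m : ℕ) (hm : m = k) : ((T f) m : EuclideanSpace ℂ (Fin d × Fin d)) p =
        a p.1 * (f k : EuclideanSpace ℂ (Fin d × Fin d)) p := hm ▸ ha f m p
    rw [hdeg _ (zero_add k), Finset.sum_eq_single p.1 (fun j _ hj => by simp [hj.symm])
      (by simp)]
    by_cases hp : 0 < stochPow P k p.1 p.2
    · have hcoef : arvCoef d P 0 k p.1 p.1 p.2 = 1 := by
        simp [arvCoef, stochPow, hp, (Real.sqrt_pos.mpr hp).ne']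
      simp [hcoef]
    · simp [(f k).2 p hp]

lemma zmod_add_eq_iff_dvd (r n : ℕ) (a b : ℤ) :
    (a : ZMod r) + n = b ↔ (r : ℤ) ∣ n + a - b := by
  rw [← CharP.intCast_eq_zero_iff (ZMod r), ← sub_eq_zero]
  push_cast
  rw [add_comm]

variable {r N : ℕ} {c : Fin d → ℤ}

lemma IsCyclicIndex.arvFiber_le_cyclicFiber (hc : IsCyclicIndex P r c N) (k : ℕ) :
    arvFiber d P k ≤ cyclicFiber c r k :=
  fun _ hv p hp => hv p fun hpos => hp ((zmod_add_eq_iff_dvd ..).mp (hc.add_eq_of_pos hpos))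

/-- The symbol of the shift by `A ∈ Arv(P)_n`. The weight `√(P^n)` is the limit of the
coefficients `arvCoef d P n k` as `k → ∞`. -/
noncomputable def shiftSymbol (P : Fin d → Fin d → ℝ) (c : Fin d → ℤ) (r n : ℕ)
    (A : Fin d → Fin d → ℂ) : CStarMatrix (Fin d) (Fin d) C(UnitAddCircle, ℂ) :=
  symbolMatrix c r n fun i j => Real.sqrt (stochPow P n i j) * A i j

lemma norm_gradedEmbedding_leftAct_sub_le {Ω : Type*} [Fintype Ω] {c : Ω → ℤ} {m : ℤ}
    {C D : Ω → Ω → Ω → ℂ} {v : EuclideanSpace ℂ (Ω × Ω)} {δ : ℝ} (hδ : 0 ≤ δ)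
    (hCD : ∀ i j l, v (j, l) ≠ 0 → ‖C i j l - D i j l‖ ≤ δ) :
    ‖gradedEmbedding c r m (leftAct C v) - gradedEmbedding c r m (leftAct D v)‖ ≤
      Fintype.card Ω ^ 3 * δ * ‖v‖ := by
  rw [← map_sub, LinearIsometry.norm_map, ← _root_.sub_apply, ← leftAct_sub]
  exact norm_leftAct_apply_le hδ hCD

lemma IsCyclicIndex.sqrt_mul_eq_zero (hc : IsCyclicIndex P r c N)
    (hA : ∀ i j, ¬ 0 < stochPow P n i j → A i j = 0) {i j : Fin d}
    (hij : ¬ (r : ℤ) ∣ n + c i - c j) : (Real.sqrt (stochPow P n i j) : ℂ) * A i j = 0 := by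
  rw [hA i j fun hpos => hij ((zmod_add_eq_iff_dvd ..).mp (hc.add_eq_of_pos hpos)), mul_zero]

lemma IsArvShift.hasSymbol (hc : IsCyclicIndex P r c N) (hP : IsStochastic P)
    (hA : ∀ i j, ¬ 0 < stochPow P n i j → A i j = 0) (hT : IsArvShift n A T) :
    HasSymbol (fockEmbedding hc.arvFiber_le_cyclicFiber) (modelRep (Fin d)) T
      (shiftSymbol P c r n A) := by
  have hsingle (k : ℕ) (v : arvFiber d P k) :
      fockEmbedding hc.arvFiber_le_cyclicFiber (T (lp.single 2 k v)) =
        gradedEmbedding c r (n + k) (arvShift P n A k v) := by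
    rw [hT.apply_single, fockEmbedding_single, Nat.cast_add]
  refine hasSymbol_symbolMatrix _ (fun i j => hc.sqrt_mul_eq_zero hA) (fun k v => ?_)
    fun ε hε => ?_
  · exact ⟨_, Nat.cast_add (R := ℤ) n k ▸ hc.arvFiber_le_cyclicFiber _ (arvShift P n A k v).2,
      hsingle k v⟩
  · obtain ⟨δ, hδ, hδε⟩ := exists_pos_mul_lt hε (Fintype.card (Fin d) ^ 3)
    filter_upwards [hc.eventually_norm_arvCoef_mul_sub_le hP hA hδ] with k hk v
    rw [hsingle, coe_arvShift_apply]
    refine (norm_gradedEmbedding_leftAct_sub_le hδ.le fun i j l hv => hk i j l ?_).trans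
      (mul_le_mul_of_nonneg_right hδε.le (norm_nonneg _))
    exact hc.add_eq_of_pos (not_imp_comm.mp (v.2 (j, l)) hv)

lemma IsArvShift.hasSymbol_star (hc : IsCyclicIndex P r c N) (hP : IsStochastic P)
    (hA : ∀ i j, ¬ 0 < stochPow P n i j → A i j = 0) (hT : IsArvShift n A T) :
    HasSymbol (fockEmbedding hc.arvFiber_le_cyclicFiber) (modelRep (Fin d)) (star T)
      (star (shiftSymbol P c r n A)) := by
  have hsingle (k : ℕ) (v : arvFiber d P (n + k)) :
      fockEmbedding hc.arvFiber_le_cyclicFiber (star T (lp.single 2 (n + k) v)) =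
        gradedEmbedding c r (-n + (n + k : ℕ)) (arvShiftAdjoint P n A k v) := by
    rw [hT.star_apply_single, fockEmbedding_single, Nat.cast_add, neg_add_cancel_left]
  rw [shiftSymbol, star_symbolMatrix fun i j => hc.sqrt_mul_eq_zero hA]
  refine hasSymbol_symbolMatrix _ (fun i j hij => ?_) (fun m v => ?_) fun ε hε => ?_
  · rw [hc.sqrt_mul_eq_zero hA fun hji => hij ?_, star_zero]
    rwa [show -(n : ℤ) + c i - c j = -(n + c j - c i) by ring, dvd_neg]
  · rcases lt_or_ge m n with hmn | hmn
    · exact ⟨0, zero_mem _, by rw [hT.star_apply_single_of_lt hmn, map_zero, map_zero]⟩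
    · obtain ⟨k, rfl⟩ := Nat.exists_eq_add_of_le hmn
      refine ⟨_, ?_, hsingle k v⟩
      rw [Nat.cast_add, neg_add_cancel_left]
      exact hc.arvFiber_le_cyclicFiber k (arvShiftAdjoint P n A k v).2
  · obtain ⟨δ, hδ, hδε⟩ := exists_pos_mul_lt hε (Fintype.card (Fin d) ^ 3)
    obtain ⟨k₀, hk₀⟩ := eventually_atTop.mp (hc.eventually_norm_arvCoef_mul_sub_le hP hA hδ)
    refine eventually_atTop.mpr ⟨n + k₀, fun m hm v => ?_⟩
    obtain ⟨k, rfl⟩ := Nat.exists_eq_add_of_le ((Nat.le_add_right n k₀).trans hm)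
    rw [hsingle, coe_arvShiftAdjoint_apply hP]
    refine (norm_gradedEmbedding_leftAct_sub_le hδ.le fun i j l hv => ?_).trans
      (mul_le_mul_of_nonneg_right hδε.le (norm_nonneg _))
    rw [← star_sub, norm_star]
    by_cases hji : 0 < stochPow P n j i
    · refine hk₀ k (by lia) j i l ?_
      have hjl := hc.add_eq_of_pos (not_imp_comm.mp (v.2 (j, l)) hv)
      rw [← hc.add_eq_of_pos hji, ← hjl, Nat.cast_add, add_assoc]
    · simp [hA j i hji, hδ.le]

/-- The C*-algebra of pairs `(T, b)` such that `b` is the symbol of `T` and `star b` that of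
`star T`. The symbol homomorphism is the function whose graph is the part of it lying over the
Toeplitz algebra. -/
noncomputable def IsCyclicIndex.symbolGraph (hc : IsCyclicIndex P r c N) :
    StarSubalgebra ℂ
      ((FockH d P →L[ℂ] FockH d P) × CStarMatrix (Fin d) (Fin d) C(UnitAddCircle, ℂ)) :=
  starCore (symbolSubalgebra (fockEmbedding hc.arvFiber_le_cyclicFiber) (modelRep (Fin d)))

lemma IsArvShift.mem_symbolGraph (hc : IsCyclicIndex P r c N) (hP : IsStochastic P)
    (hA : ∀ i j, ¬ 0 < stochPow P n i j → A i j = 0) (hT : IsArvShift n A T) :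
    (T, shiftSymbol P c r n A) ∈ hc.symbolGraph :=
  mem_starCore.mpr ⟨⟨hT.hasSymbol hc hP hA, hT.mem_tailPreserving⟩,
    hT.hasSymbol_star hc hP hA, hT.star_mem_tailPreserving⟩

end ArvShift

end Shifts

section Generation

open Filter
open scoped ComplexOrder

variable {Ω : Type*} [DecidableEq Ω]

/-- The matrix with entry `a` in position `(i, j)` and zeros elsewhere. -/
noncomputable def entryEmbedding {A : Type*} [CStarAlgebra A] [PartialOrder A] [StarOrderedRing A]
    (i j : Ω) : A →L[ℂ] CStarMatrix Ω Ω A :=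
  CStarMatrix.ofMatrixL.toContinuousLinearMap ∘L
    ⟨Matrix.singleLinearMap ℂ i j, continuous_matrix fun a b => by
      change Continuous fun x => if i = a ∧ j = b then x else 0
      split_ifs <;> fun_prop⟩

section CStar

variable {A : Type*} [CStarAlgebra A] [PartialOrder A] [StarOrderedRing A]

lemma entryEmbedding_apply (i j : Ω) (a : A) :
    entryEmbedding i j a = CStarMatrix.ofMatrix (Matrix.single i j a) := rfl

lemma star_entryEmbedding (i j : Ω) (a : A) :
    star (entryEmbedding i j a) = entryEmbedding j i (star a) :=
  congrArg CStarMatrix.ofMatrix (Matrix.conjTranspose_single i j a)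

variable [Fintype Ω]

lemma entryEmbedding_mul_entryEmbedding (i j k : Ω) (a b : A) :
    entryEmbedding i j a * entryEmbedding j k b = entryEmbedding i k (a * b) :=
  congrArg CStarMatrix.ofMatrix (Matrix.single_mul_single_same a i j k b)

lemma sum_entryEmbedding (M : CStarMatrix Ω Ω A) :
    ∑ i, ∑ j, entryEmbedding i j (M i j) = M :=
  (Matrix.matrix_eq_sum_single M).symm

end CStar

variable [Fintype Ω] {R : StarSubalgebra ℂ (CStarMatrix Ω Ω C(UnitAddCircle, ℂ))}

lemma eq_top_of_forall_entryEmbedding_fourier_mem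
    (hR : IsClosed (R : Set (CStarMatrix Ω Ω C(UnitAddCircle, ℂ))))
    (hfourier : ∀ i j m, entryEmbedding i j (fourier m) ∈ R) : R = ⊤ := by
  have hentry (i j : Ω) (f : C(UnitAddCircle, ℂ)) : entryEmbedding i j f ∈ R := by
    have hspan : Submodule.span ℂ (Set.range fourier) ≤
        R.toSubalgebra.toSubmodule.comap (entryEmbedding i j).toLinearMap :=
      Submodule.span_le.mpr (Set.range_subset_iff.mpr (hfourier i j))
    refine Submodule.topologicalClosure_minimal _ hspan
      (hR.preimage (entryEmbedding i j).continuous) ?_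
    rw [span_fourier_closure_eq_top]
    exact Submodule.mem_top
  refine eq_top_iff.mpr fun M _ => ?_
  rw [← sum_entryEmbedding M]
  exact sum_mem fun i _ => sum_mem fun j _ => hentry i j _

lemma entryEmbedding_fourier_mem_of_eventually
    (hR : ∀ i j, ∀ᶠ m : ℤ in atTop, entryEmbedding i j (fourier m) ∈ R) (i j : Ω) (m : ℤ) :
    entryEmbedding i j (fourier m) ∈ R := by
  obtain ⟨k, hmk, hk⟩ :=
    (((tendsto_atTop_add_const_left atTop m tendsto_id).eventually (hR i j)).and (hR j j)).exists
  have hfourier : (fourier (m + k) * star (fourier k) : C(UnitAddCircle, ℂ)) = fourier m := by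
    ext x
    rw [ContinuousMap.mul_apply, ContinuousMap.star_apply, RCLike.star_def, ← fourier_neg,
      ← fourier_add, add_neg_cancel_right]
  have := mul_mem hmk (star_mem hk)
  rwa [star_entryEmbedding, entryEmbedding_mul_entryEmbedding, id, hfourier] at this

section Symbols

variable {d : ℕ} {P : Fin d → Fin d → ℝ} {c : Fin d → ℤ} {r N n : ℕ}
  {R : StarSubalgebra ℂ (CStarMatrix (Fin d) (Fin d) C(UnitAddCircle, ℂ))}

lemma shiftSymbol_single (c : Fin d → ℤ) (r : ℕ) {i j : Fin d} (hpos : 0 < stochPow P n i j) :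
    shiftSymbol P c r n (Matrix.single i j (Real.sqrt (stochPow P n i j) : ℂ)⁻¹) =
      entryEmbedding i j (fourier (fourierDegree c r n i j)) := by
  have hsqrt : (Real.sqrt (stochPow P n i j) : ℂ) ≠ 0 := by
    exact_mod_cast (Real.sqrt_pos.mpr hpos).ne'
  refine CStarMatrix.ext fun a b => ?_
  change symbolMatrix c r n _ a b = _
  rw [symbolMatrix_apply, entryEmbedding_apply, CStarMatrix.ofMatrix_apply]
  by_cases hab : i = a ∧ j = b
  · obtain ⟨rfl, rfl⟩ := hab
    rw [Matrix.single_apply_same, Matrix.single_apply_same, mul_inv_cancel₀ hsqrt, one_smul]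
  · ext x
    simp [Matrix.single_apply_of_ne _ _ _ _ _ hab]

lemma IsCyclicIndex.eventually_entryEmbedding_fourier_mem (hc : IsCyclicIndex P r c N)
    (hR : ∀ n A, (∀ i j, ¬ 0 < stochPow P n i j → A i j = 0) → shiftSymbol P c r n A ∈ R)
    (i j : Fin d) : ∀ᶠ m : ℤ in atTop, entryEmbedding i j (fourier m) ∈ R := by
  have hr : (0 : ℤ) < r := by exact_mod_cast hc.period_pos
  filter_upwards [eventually_ge_atTop (N + |c i - c j|)] with m hm
  have hrm : N + |c i - c j| ≤ r * m :=
    hm.trans (le_mul_of_one_le_left ((by positivity : (0 : ℤ) ≤ N + |c i - c j|).trans hm) hr)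
  obtain ⟨n, hn⟩ := Int.eq_ofNat_of_zero_le (a := r * m - (c i - c j))
    (by linarith [le_abs_self (c i - c j)])
  have hdeg : (n : ℤ) + c i - c j = r * m := by linarith
  have hNn : N ≤ n := by
    have := le_abs_self (c i - c j)
    lia
  have hpos : 0 < stochPow P n i j :=
    hc.pos_of_add_eq hNn ((zmod_add_eq_iff_dvd ..).mpr (hdeg ▸ dvd_mul_right _ _))
  have hfourier : fourierDegree c r n i j = m := by
    rw [fourierDegree, hdeg, Int.mul_ediv_cancel_left _ hr.ne']
  rw [← hfourier, ← shiftSymbol_single c r hpos]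
  refine hR n _ fun a b hab => Matrix.single_apply_of_ne _ _ _ _ _ ?_
  rintro ⟨rfl, rfl⟩
  exact hab hpos

lemma IsCyclicIndex.eq_top_of_forall_shiftSymbol_mem (hc : IsCyclicIndex P r c N)
    (hclosed : IsClosed (R : Set (CStarMatrix (Fin d) (Fin d) C(UnitAddCircle, ℂ))))
    (hR : ∀ n A, (∀ i j, ¬ 0 < stochPow P n i j → A i j = 0) → shiftSymbol P c r n A ∈ R) :
    R = ⊤ :=
  eq_top_of_forall_entryEmbedding_fourier_mem hclosed
    (entryEmbedding_fourier_mem_of_eventually (hc.eventually_entryEmbedding_fourier_mem hR))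

lemma IsCyclicIndex.frequently_single_mem_arvFiber (hc : IsCyclicIndex P r c N) (j : Fin d) :
    ∃ᶠ k in atTop, EuclideanSpace.single (j, j) 1 ∈ arvFiber d P k := by
  refine frequently_atTop.mpr fun K => ⟨r * (K + N), ?_, fun p hp => ?_⟩
  · exact (Nat.le_add_right K N).trans (Nat.le_mul_of_pos_left _ hc.period_pos)
  · rw [PiLp.single_apply, if_neg]
    rintro rfl
    refine hp (hc.pos_of_add_eq ?_ (by simp))
    exact (Nat.le_add_left N K).trans (Nat.le_mul_of_pos_left _ hc.period_pos)

end Symbols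

end Generation

section Transfer

/-- A star isomorphism of coefficient algebras, applied to each entry of a matrix. -/
def matrixCongr (n : Type*) [Fintype n] {A B : Type*} [Semiring A] [Algebra ℂ A] [StarRing A]
    [Semiring B] [Algebra ℂ B] [StarRing B] (e : A ≃⋆ₐ[ℂ] B) :
    Matrix n n A ≃⋆ₐ[ℂ] Matrix n n B where
  toFun M := M.map e
  invFun M := M.map e.symm
  left_inv M := Matrix.ext fun i j => e.symm_apply_apply (M i j)
  right_inv M := Matrix.ext fun i j => e.apply_symm_apply (M i j)
  map_mul' _ _ := Matrix.map_mul
  map_add' := Matrix.map_add e (map_add e)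
  map_star' _ := Matrix.conjTranspose_map e (map_star e)
  map_smul' z M := Matrix.map_smul e z (map_smul e z) M

/-- The identification of the target of the symbol map with the matrices over `C(𝕋)`. -/
noncomputable def circleMatrixEquiv (n : Type*) [Fintype n] :
    CStarMatrix n n C(UnitAddCircle, ℂ) ≃⋆ₐ[ℂ] Matrix n n C(Circle, ℂ) :=
  CStarMatrix.ofMatrixStarAlgEquiv.symm.trans
    (matrixCongr n ((AddCircle.homeomorphCircle one_ne_zero).symm.compStarAlgEquiv' ℂ ℂ))

end Transfer

section SymbolHom

open scoped ComplexOrder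

variable {d : ℕ} {P : Fin d → Fin d → ℝ} {c : Fin d → ℤ} {r N : ℕ}

variable {T : FockH d P →L[ℂ] FockH d P} {b : CStarMatrix (Fin d) (Fin d) C(UnitAddCircle, ℂ)}

lemma IsCyclicIndex.isClosed_symbolGraph (hc : IsCyclicIndex P r c N) :
    IsClosed (hc.symbolGraph : Set ((FockH d P →L[ℂ] FockH d P) ×
      CStarMatrix (Fin d) (Fin d) C(UnitAddCircle, ℂ))) := by
  have : ContinuousStar (CStarMatrix (Fin d) (Fin d) C(UnitAddCircle, ℂ)) :=
    inferInstanceAs (ContinuousStar (Matrix (Fin d) (Fin d) C(UnitAddCircle, ℂ)))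
  exact isClosed_starCore <| isClosed_symbolSubalgebra _ <|
    continuous_matrixRep (continuous_multiplicationRep _)

lemma IsCyclicIndex.mem_tailVanishing_iff_eq_zero (hc : IsCyclicIndex P r c N)
    (h : (T, b) ∈ hc.symbolGraph) :
    T ∈ tailVanishing (fun n => arvFiber d P n) (FockH d P) ↔ b = 0 := by
  have hT : HasSymbol _ _ T b := (mem_symbolSubalgebra.mp (mem_starCore.mp h).1).1
  refine hT.mem_tailVanishing_iff.trans
    ⟨eq_zero_of_modelRep_comp_mem_tailVanishing _ hc.frequently_single_mem_arvFiber, ?_⟩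
  rintro rfl
  rw [map_zero, ContinuousLinearMap.zero_comp]
  exact zero_mem _

lemma IsCyclicIndex.exists_symbolHom (hc : IsCyclicIndex P r c N) (hP : IsStochastic P) :
    ∃ Ψ : ToeplitzAlg d P →⋆ₐ[ℂ] CStarMatrix (Fin d) (Fin d) C(UnitAddCircle, ℂ),
      Function.Surjective Ψ ∧ ∀ T : ToeplitzAlg d P, (T.1, Ψ T) ∈ hc.symbolGraph := by
  refine exists_surjective_starAlgHom_closure_adjoin_mem_graph hc.isClosed_symbolGraph
    (fun b hb => (hc.mem_tailVanishing_iff_eq_zero hb).mp (zero_mem _)) (fun T hT => ?_)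
    fun R hR hmem => hc.eq_top_of_forall_shiftSymbol_mem hR fun n A hA => ?_
  · obtain ⟨n, A, hA, hTA⟩ := isShiftOp_iff.mp (hT.elim id IsDiagOp.isShiftOp)
    exact ⟨_, hTA.mem_symbolGraph hc hP hA⟩
  · obtain ⟨T, hT⟩ := hP.exists_isArvShift n A
    exact hmem T (Or.inl (isShiftOp_iff.mpr ⟨n, A, hA, hT⟩)) _ (hT.mem_symbolGraph hc hP hA)

end SymbolHom

/-- main claim: for a `d × d` irreducible stochastic matrix `P`, the
Cuntz–Pimsner algebra `O(Arv(P)) = T(Arv(P)) / J(T(Arv(P)))` is `C(𝕋) ⊗ M_d(ℂ)`: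
there is a surjective star-algebra homomorphism `T(Arv(P)) → M_d(C(𝕋))` whose kernel is
exactly the Cuntz ideal. -/
theorem cuntzPimsner_of_irreducible_stochastic (hd : 0 < d)
    (hP : IsStochastic P) (hirr : StochIrreducible P) :
    ∃ Φ : ↥(ToeplitzAlg d P) →⋆ₐ[ℂ] Matrix (Fin d) (Fin d) C(Circle, ℂ),
      Function.Surjective Φ ∧
      ∀ T : ↥(ToeplitzAlg d P),
        Φ T = 0 ↔ InCuntzIdeal d P (T : FockH d P →L[ℂ] FockH d P) := by
  have : Nonempty (Fin d) := Fin.pos_iff_nonempty.mp hd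
  obtain ⟨r, c, N, hc⟩ := exists_isCyclicIndex hP hirr
  obtain ⟨Ψ, hsurj, hgraph⟩ := hc.exists_symbolHom hP
  let e := circleMatrixEquiv (Fin d)
  refine ⟨e.toStarAlgHom.comp Ψ, e.surjective.comp hsurj, fun T => ?_⟩
  rw [inCuntzIdeal_iff_mem_tailVanishing, hc.mem_tailVanishing_iff_eq_zero (hgraph T)]
  exact map_eq_zero_iff e e.injective
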